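/- arXiv:math/0210188 — 2 statements merged into one kernel-verified Lean document; each statement's English description precedes it below -/
import Mathlib

section
/- Let 𝔨 = 𝔥 ⊕ ⨁_{α∈P} 𝔤_α be a reductive subalgebra of maximal rank of 𝔤 corresponding to a closed symmetric subsystem P ⊆ Ω. Then there exists a finite chain Ω = P_0 ⊇ P_1 ⊇ ⋯ ⊇ P_m = P of closed symmetric subsystems of Ω such that for each j = 1, …, m the subsystem P_j is obtained from P_{j−1} by applying either the Levi procedure or the Dynkin procedure. -/
open LieAlgebra

section CombinatorialDefs

variable {V : Type*} [AddCommGroup V] [Module ℂ V]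

/-- `P` is a closed symmetric subsystem of `Ω`: `P ⊆ Ω`, `P = -P`, and `P` is closed
under addition within `Ω`. -/
def IsClosedSymmetricSubsystem (Ω P : Set V) : Prop :=
  P ⊆ Ω ∧ (∀ a ∈ P, -a ∈ P) ∧ ∀ a ∈ P, ∀ b ∈ P, a + b ∈ Ω → a + b ∈ P

/-- `Pi` is a system of simple roots of `Q`: a linearly independent subset of `Q` such that
every element of `Q` is an integral linear combination of elements of `Pi` with coefficients
all nonnegative or all nonpositive. -/
def IsSimpleSystem (Q Pi : Set V) : Prop :=
  Pi ⊆ Q ∧ LinearIndependent ℂ (Subtype.val : Pi → V) ∧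
    ∀ q ∈ Q, ∃ c : V →₀ ℤ, (c.support : Set V) ⊆ Pi ∧
      q = c.sum (fun v n => n • v) ∧ ((∀ v, 0 ≤ c v) ∨ (∀ v, c v ≤ 0))

/-- The Levi procedure: `Q' = ℤΣ ∩ Q` for a subset `Sig` of a system of simple roots of `Q`. -/
def LeviStep (Q Q' : Set V) : Prop :=
  ∃ Pi Sig : Set V, IsSimpleSystem Q Pi ∧ Sig ⊆ Pi ∧
    Q' = {q ∈ Q | q ∈ AddSubgroup.closure Sig}

/-- The Dynkin procedure: `Q'` consists of those elements of `Q` whose coefficient of `α`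
in the expansion in the simple system `Pi` is divisible by `n`. -/
def DynkinStep (Q Q' : Set V) : Prop :=
  ∃ Pi : Set V, IsSimpleSystem Q Pi ∧ ∃ α ∈ Pi, ∃ n : ℕ, 0 < n ∧
    Q' = {β ∈ Q | ∃ c : V →₀ ℤ, (c.support : Set V) ⊆ Pi ∧
      β = c.sum (fun v k => k • v) ∧ (n : ℤ) ∣ c α}

end CombinatorialDefs

section LieSetup

variable (L : Type*) [LieRing L] [LieAlgebra ℂ L] [FiniteDimensional ℂ L]
  (H : LieSubalgebra ℂ L) [H.IsCartanSubalgebra]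

/-- The set `Ω` of roots of `L` with respect to the Cartan subalgebra `H`, regarded as
(nonzero) linear functionals on `H` with nonzero root space. -/
def lieRoots : Set (Module.Dual ℂ H) :=
  {α | α ≠ 0 ∧ rootSpace H ⇑α ≠ ⊥}

/-- The group `Γ_𝔨 = ℤΩ / ℤP`. -/
abbrev GammaK (P : Set (Module.Dual ℂ H)) : Type _ :=
  AddSubgroup.closure (lieRoots L H) ⧸
    (AddSubgroup.closure P).addSubgroupOf (AddSubgroup.closure (lieRoots L H))

/-- The image `ᾱ` of a root `α` in `Γ_𝔨 = ℤΩ / ℤP`. -/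
def rootImage (P : Set (Module.Dual ℂ H)) {α : Module.Dual ℂ H}
    (hα : α ∈ lieRoots L H) : GammaK L H P :=
  QuotientAddGroup.mk ⟨α, AddSubgroup.subset_closure hα⟩

/-- The subspace `𝔨 = 𝔥 ⊕ ⨁_{α ∈ P} 𝔤_α` of `L`. -/
noncomputable def lieK (P : Set (Module.Dual ℂ H)) : Submodule ℂ L :=
  H.toSubmodule ⊔ ⨆ α ∈ P, (rootSpace H ⇑α : LieSubmodule ℂ H L).toSubmodule

/-- The subspace `𝔪 = ⨁_{γ ∈ Ω \ P} 𝔤_γ` of `L`. -/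
noncomputable def lieM (P : Set (Module.Dual ℂ H)) : Submodule ℂ L :=
  ⨆ γ ∈ lieRoots L H \ P, (rootSpace H ⇑γ : LieSubmodule ℂ H L).toSubmodule

end LieSetup

/-!
Let `q` be a root outside the closed symmetric subsystem `P`. Since `P` is closed, `q` does not lie
in the lattice `ℤP`, so by the Smith normal form there are an integral functional `z` on the root
lattice and an integer `D` with `D ∣ z` on `P` but `¬ D ∣ z q`. If `D = 0`, then in a base with
`z ≥ 0` any simple root `a` with `z a > 0` has coefficient `0` in every root of `P`.

If `D > 0`, then among all functionals congruent to `z` modulo `D`, one that minimizes the sum of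
`z ^ 2` over the roots satisfies `z ≤ D` on all roots, since otherwise subtracting `D` times a
coroot decreases this sum. Choose a base with `z ≥ 0`. The positive roots with `D ∣ z` then have
`z = 0` or `z = D`. Those with `z = D` have maximal `z`, and by the argument for the uniqueness of
highest roots any two of them in the same component have equal coefficients at all simple roots with
`z > 0`. Let `a` be a simple root with `¬ D ∣ z a`, and let `n` be the common coefficient at `a` of
the positive roots with `z = D` that contain `a` (`n = 0` if there are none); it divides the
coefficient at `a` of every root with `D ∣ z`. If `n = 1`, these roots contain a second simple root
`e` with `z e > 0`, so all roots with `D ∣ z` lie in the kernel of a functional that does not vanish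
on `e`, which is the situation of `D = 0`.

In all cases `P` is contained in the proper closed subsystem of the roots whose coefficient at some
simple root is divisible by some `n ≠ 1`. It arises from a Levi step if `n = 0` and from a Dynkin
step otherwise. Now induct on the number of roots.
-/

open Module RootPairing

namespace DynkinChain

lemma exists_dual_forall_dvd_and_not_dvd {R M : Type*} [CommRing R] [IsDomain R]
    [IsPrincipalIdealRing R] [AddCommGroup M] [Module R M] [Module.Free R M] [Module.Finite R M]
    {N : Submodule R M} {x : M} (hx : x ∉ N) :
    ∃ (z : Dual R M) (d : R), (∀ y ∈ N, d ∣ z y) ∧ ¬ d ∣ z x := by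
  contrapose! hx
  obtain ⟨n, snf⟩ := N.smithNormalForm (Module.Free.chooseBasis R M)
  rw [← snf.bM.sum_repr x]
  refine N.sum_mem fun j _ ↦ ?_
  by_cases hj : j ∈ Set.range snf.f
  · obtain ⟨i, rfl⟩ := hj
    obtain ⟨c, hc⟩ := hx (snf.bM.coord (snf.f i)) (snf.a i) fun y hy ↦
      ⟨_, LinearMap.congr_fun snf.coord_apply_embedding_eq_smul_coord ⟨y, hy⟩⟩
    rw [← snf.bM.coord_apply, hc, mul_comm, mul_smul, ← snf.snf]
    exact N.smul_mem c (snf.bN i).2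
  · have := hx (snf.bM.coord j) 0 fun y hy ↦
      (snf.le_ker_coord_of_notMem_range hj hy).symm ▸ dvd_rfl
    rw [← snf.bM.coord_apply, zero_dvd_iff.mp this, zero_smul]
    exact N.zero_mem

lemma exists_rat_forall_abs_lt_mul_abs {α : Type*} [Finite α] (f g : α → ℚ) :
    ∃ C : ℚ, 0 < C ∧ ∀ i, f i ≠ 0 → |g i| < C * |f i| := by
  have eventually_lt (i : α) : ∀ᶠ C : ℚ in Filter.atTop, f i ≠ 0 → |g i| < C * |f i| := by
    by_cases hi : f i = 0
    · simp [hi]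
    · filter_upwards [Filter.eventually_gt_atTop (|g i| / |f i|)] with C hC _
      exact (div_lt_iff₀ (abs_pos.mpr hi)).mp hC
  exact ((Filter.eventually_gt_atTop 0).and (Filter.eventually_all.mpr eventually_lt)).exists

section RootPairing

variable {ι K M N : Type*} [Finite ι] [Field K] [CharZero K] [AddCommGroup M] [Module K M]
  [AddCommGroup N] [Module K N] (R : RootPairing ι K M N) [R.IsCrystallographic]

lemma exists_base_forall_nonneg_of_isRootSystem [R.IsReduced] [R.IsRootSystem] (z : M →+ ℚ) :
    ∃ b : R.Base, ∀ a ∈ b.support, 0 ≤ z (R.root a) := by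
  let _ : Module ℚ M := Module.compHom M (algebraMap ℚ K)
  let _ := R.indexNeg
  obtain ⟨g, hg⟩ : ∃ g : Dual ℚ M, ∀ i, g (R.root i) ≠ 0 :=
    exists_dual_forall_apply_ne_zero R.root fun i ↦ R.ne_zero i
  obtain ⟨C, C_pos, hC⟩ :=
    exists_rat_forall_abs_lt_mul_abs (fun i ↦ z (R.root i)) (fun i ↦ g (R.root i))
  -- A generic perturbation of a large multiple of `z` has the signs of `z` wherever `z` is nonzero.
  let f : M →+ ℚ := (AddMonoidHom.mulLeft C).comp z + (g : M →+ ℚ)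
  have f_apply (i : ι) : f (R.root i) = C * z (R.root i) + g (R.root i) := rfl
  have f_ne_zero (i : ι) : f (R.root i) ≠ 0 := fun hfi ↦ by
    by_cases hi : z (R.root i) = 0
    · exact hg i (by simpa [f_apply, hi] using hfi)
    · have := hC i hi
      rw [eq_neg_of_add_eq_zero_right ((f_apply i).symm.trans hfi), abs_neg, abs_mul,
        abs_of_pos C_pos] at this
      exact this.false
  refine ⟨Base.mk' R (IsAddIndecomposable.baseOf R.root f) (R.linearIndepOn_root_baseOf f f_ne_zero)
    fun i ↦ IsAddIndecomposable.mem_or_neg_mem_closure_baseOf R.root f i (f_ne_zero i) (by simp),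
    fun a ha ↦ ?_⟩
  have fa_pos : 0 < f (R.root a) := by
    have ha' : a ∈ IsAddIndecomposable.baseOf R.root f := by simpa [Base.mk'] using ha
    exact ha'.1
  by_contra! hza
  have := hC a hza.ne
  rw [abs_of_neg hza] at this
  linarith [f_apply a, le_abs_self (g (R.root a))]

section RestrictScalars

variable [R.IsBalanced]

omit [Finite ι] [CharZero K]

instance : (R.restrictScalars K).IsCrystallographic where
  exists_value i j := by
    obtain ⟨n, hn⟩ := R.exists_value (S := ℤ) i j
    exact ⟨n, hn.trans (R.restrictScalars_pairing K i j).symm⟩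

instance [R.IsReduced] : (R.restrictScalars K).IsReduced where
  eq_or_eq_neg i j h := by
    have := IsReduced.eq_or_eq_neg (P := R) i j fun h' ↦ h <| .of_comp (R.rootSpan K).subtype <| by
      convert h' using 1
      ext k
      fin_cases k <;> rfl
    exact this.imp Subtype.ext Subtype.ext

lemma exists_base_support_eq_of_restrictScalars (b : (R.restrictScalars K).Base) :
    ∃ b' : R.Base, b'.support = b.support := by
  refine ⟨⟨b.support, b.linearIndepOn_root.map_injOn (R.rootSpan K).subtype (by simp),
    b.linearIndepOn_coroot.map_injOn (R.corootSpan K).subtype (by simp), fun i ↦ ?_, fun i ↦ ?_⟩,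
    rfl⟩
  · have image_root : R.root '' b.support = (R.rootSpan K).subtype.toAddMonoidHom ''
        ((R.restrictScalars K).root '' b.support) := by simp [Set.image_image]
    rw [image_root, ← AddMonoidHom.map_mclosure]
    exact (b.root_mem_or_neg_mem i).imp (fun h ↦ ⟨_, h, rfl⟩) (fun h ↦ ⟨_, h, rfl⟩)
  · have image_coroot : R.coroot '' b.support = (R.corootSpan K).subtype.toAddMonoidHom ''
        ((R.restrictScalars K).coroot '' b.support) := by simp [Set.image_image]
    rw [image_coroot, ← AddMonoidHom.map_mclosure]
    exact (b.coroot_mem_or_neg_mem i).imp (fun h ↦ ⟨_, h, rfl⟩) (fun h ↦ ⟨_, h, rfl⟩)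

end RestrictScalars

lemma exists_base_forall_nonneg [R.IsReduced] (z : R.rootSpan ℤ →ₗ[ℤ] ℤ) :
    ∃ b : R.Base, ∀ a ∈ b.support, 0 ≤ z (R.rootSpanMem ℤ a) := by
  have := Fintype.ofFinite ι
  obtain ⟨f, hf⟩ := (Baer.of_divisible ℚ).extension_property_addMonoidHom
    (R.rootSpan ℤ).subtype.toAddMonoidHom Subtype.val_injective
    ((Int.castAddHom ℚ).comp z.toAddMonoidHom)
  obtain ⟨b, hb⟩ := exists_base_forall_nonneg_of_isRootSystem (R.restrictScalars K)
    (f.comp (R.rootSpan K).subtype.toAddMonoidHom)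
  obtain ⟨b', hb'⟩ := exists_base_support_eq_of_restrictScalars R b
  refine ⟨b', fun a ha ↦ ?_⟩
  have f_root : f (R.root a) = z (R.rootSpanMem ℤ a) := DFunLike.congr_fun hf (R.rootSpanMem ℤ a)
  exact_mod_cast f_root ▸ hb a (hb' ▸ ha)

omit [Finite ι] in
lemma exists_mem_pairingIn_pos_of_sum_root_eq {l : Multiset ι} {i : ι}
    (hl : (l.map R.root).sum = R.root i) : ∃ j ∈ l, 0 < R.pairingIn ℤ j i := by
  have sum_pairingIn : (l.map fun j ↦ R.pairingIn ℤ j i).sum = 2 := by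
    have := congr_arg (R.coroot' i) hl
    rw [map_multiset_sum, Multiset.map_map] at this
    apply FaithfulSMul.algebraMap_injective ℤ K
    rw [map_multiset_sum, Multiset.map_map]
    simpa [Function.comp_def, ← R.algebraMap_pairingIn ℤ] using this
  by_contra! h
  have := Multiset.sum_nonneg (s := l.map fun j ↦ -R.pairingIn ℤ j i) (by simpa using h)
  rw [Multiset.sum_map_neg, sum_pairingIn] at this
  norm_num at this

variable {R} {Q : Set M}

lemma root_mem_of_sum_root_eq (hQ : IsClosedSymmetricSubsystem (Set.range R.root) Q)
    {l : Multiset ι} (hl : ∀ j ∈ l, R.root j ∈ Q) {i : ι} (hi : (l.map R.root).sum = R.root i) :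
    R.root i ∈ Q := by
  classical
  induction l using Multiset.strongInductionOn generalizing i with
  | ih l ih =>
    obtain ⟨j, hj, pairing_pos⟩ := exists_mem_pairingIn_pos_of_sum_root_eq R hi
    obtain rfl | hne := eq_or_ne j i
    · exact hl j hj
    obtain ⟨k, hk⟩ := R.root_sub_root_mem_of_pairingIn_pos
      ((R.zero_lt_pairingIn_iff' ℤ).mp pairing_pos) hne.symm
    have sum_erase : ((l.erase j).map R.root).sum = R.root k := by
      rw [hk, ← hi, ← Multiset.cons_erase hj]
      simp
    have root_k_mem : R.root k ∈ Q :=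
      ih _ (Multiset.erase_lt.mpr hj) (fun m hm ↦ hl m (Multiset.mem_of_mem_erase hm)) sum_erase
    have root_i_eq : R.root i = R.root j + R.root k := by rw [hk, add_sub_cancel]
    rw [root_i_eq]
    exact hQ.2.2 _ (hl j hj) _ root_k_mem ⟨i, root_i_eq⟩

lemma root_mem_of_mem_closure (hQ : IsClosedSymmetricSubsystem (Set.range R.root) Q) {i : ι}
    (hi : R.root i ∈ AddSubgroup.closure Q) : R.root i ∈ Q := by
  have neg_Q : -Q = Q := Set.ext fun q ↦
    ⟨fun hq ↦ by simpa using hQ.2.1 _ hq, fun hq ↦ hQ.2.1 _ hq⟩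
  rw [← AddSubgroup.mem_toAddSubmonoid, AddSubgroup.closure_toAddSubmonoid, neg_Q,
    Set.union_self] at hi
  obtain ⟨l, l_sub, hl⟩ := AddSubmonoid.exists_list_of_mem_closure hi
  obtain ⟨l, rfl⟩ : l ∈ Set.range (List.map R.root) :=
    Set.range_list_map R.root ▸ fun q hq ↦ hQ.1 (l_sub q hq)
  exact root_mem_of_sum_root_eq (l := l) hQ (fun j hj ↦ l_sub _ (List.mem_map_of_mem hj)) hl

lemma root_reflectionPerm_mem_iff (hQ : IsClosedSymmetricSubsystem (Set.range R.root) Q) {i j : ι}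
    (hi : R.root i ∈ Q) : R.root (R.reflectionPerm i j) ∈ Q ↔ R.root j ∈ Q := by
  suffices ∀ k, R.root k ∈ Q → R.root (R.reflectionPerm i k) ∈ Q from
    ⟨fun h ↦ by simpa using this _ h, this j⟩
  intro k hk
  apply root_mem_of_mem_closure hQ
  rw [root_reflectionPerm, R.reflection_apply_root' ℤ]
  exact sub_mem (AddSubgroup.subset_closure hk) (zsmul_mem (AddSubgroup.subset_closure hi) _)

variable (R) in
/-- The root pairing whose roots are the elements of a closed symmetric subsystem `Q` of the roots
of `R`, inside the same modules; it is a root pairing on its own because `Q` is stable under the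
reflections in its elements. -/
def subpairing (hQ : IsClosedSymmetricSubsystem (Set.range R.root) Q) :
    RootPairing {i // R.root i ∈ Q} K M N where
  toLinearMap := R.toLinearMap
  root := (Function.Embedding.subtype _).trans R.root
  coroot := (Function.Embedding.subtype _).trans R.coroot
  root_coroot_two i := R.root_coroot_two i
  reflectionPerm i :=
    (R.reflectionPerm i).subtypeEquiv fun _ ↦ (root_reflectionPerm_mem_iff hQ i.2).symm
  reflectionPerm_root i j := R.reflectionPerm_root i j
  reflectionPerm_coroot i j := R.reflectionPerm_coroot i j

variable (hQ : IsClosedSymmetricSubsystem (Set.range R.root) Q)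

lemma range_root_subpairing : Set.range (subpairing R hQ).root = Q := by
  ext q
  exact ⟨fun ⟨i, hi⟩ ↦ hi ▸ i.2, fun hq ↦ (hQ.1 hq).elim fun i hi ↦ ⟨⟨i, hi ▸ hq⟩, hi⟩⟩

instance : (subpairing R hQ).IsCrystallographic where
  exists_value i j := R.exists_value (S := ℤ) i j

instance [R.IsReduced] : (subpairing R hQ).IsReduced where
  eq_or_eq_neg i j := IsReduced.eq_or_eq_neg (P := R) i.1 j.1

end RootPairing

section Coefficients

variable {ι K M N : Type*} [Field K] [CharZero K] [AddCommGroup M] [Module K M]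
  [AddCommGroup N] [Module K N] {R : RootPairing ι K M N} (b : R.Base)

/-- The coefficients of the root `i` in the base `b`, as a function of the simple roots. -/
noncomputable def coeff (i : ι) : b.support → ℤ :=
  b.toWeightBasisInt.repr (R.rootSpanMem ℤ i)

lemma toWeightBasisInt_apply (a : b.support) : b.toWeightBasisInt a = R.rootSpanMem ℤ a :=
  Subtype.ext (b.coe_toWeightBasisInt_apply a)

lemma coeff_self (a : b.support) : coeff b a a = 1 := by
  rw [coeff, ← toWeightBasisInt_apply, Basis.repr_self, Finsupp.single_eq_same]

lemma coeff_of_ne {a e : b.support} (h : a ≠ e) : coeff b a e = 0 := by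
  rw [coeff, ← toWeightBasisInt_apply, Basis.repr_self, Finsupp.single_eq_of_ne h.symm]

lemma coeff_reflectionPerm_self (i : ι) : coeff b (R.reflectionPerm i i) = -coeff b i := by
  ext a
  simp only [coeff, rootSpanMem_reflectionPerm_self, map_neg, Finsupp.neg_apply, Pi.neg_apply]

omit [CharZero K] in
lemma rootSpanMem_eq_add {i j k : ι} (hk : R.root k = R.root i + R.root j) :
    R.rootSpanMem ℤ k = R.rootSpanMem ℤ i + R.rootSpanMem ℤ j :=
  Subtype.ext hk

lemma coeff_eq_add {i j k : ι} (hk : R.root k = R.root i + R.root j) :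
    coeff b k = coeff b i + coeff b j := by
  ext a
  simp only [coeff, rootSpanMem_eq_add hk, map_add, Finsupp.add_apply, Pi.add_apply]

lemma coeff_nonneg_of_mem_support {i : ι} (hi : i ∈ b.support) : 0 ≤ coeff b i := by
  intro a
  obtain h | h := eq_or_ne ⟨i, hi⟩ a
  · exact h ▸ (coeff_self b ⟨i, hi⟩).ge.trans' zero_le_one
  · exact (coeff_of_ne b h).ge

lemma coeff_nonneg_or_nonpos (i : ι) : 0 ≤ coeff b i ∨ coeff b i ≤ 0 := by
  obtain ⟨f, -, f_sign, hf⟩ := b.exists_root_eq_sum_int i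
  have root_eq : R.rootSpanMem ℤ i = ∑ a : b.support, f a • b.toWeightBasisInt a := by
    apply Subtype.ext
    simp only [AddSubmonoidClass.coe_finsetSum, SetLike.val_smul, Base.coe_toWeightBasisInt_apply]
    exact hf.trans (Finset.sum_coe_sort b.support fun j ↦ f j • R.root j).symm
  have coeff_eq (a : b.support) : coeff b i a = f a := by
    rw [coeff, root_eq, Basis.repr_sum_self]
  exact f_sign.imp (fun h a ↦ coeff_eq a ▸ h.le a) (fun h a ↦ coeff_eq a ▸ h.le a)

lemma coeff_reflectionPerm_self_nonneg {i : ι} (hi : ¬ 0 ≤ coeff b i) :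
    0 ≤ coeff b (R.reflectionPerm i i) := by
  rw [coeff_reflectionPerm_self]
  exact neg_nonneg.mpr ((coeff_nonneg_or_nonpos b i).resolve_left hi)

lemma sum_coeff_mul (z : R.rootSpan ℤ →ₗ[ℤ] ℤ) (i : ι) :
    ∑ a, coeff b i a * z (R.rootSpanMem ℤ a) = z (R.rootSpanMem ℤ i) := by
  conv_rhs => rw [← b.toWeightBasisInt.sum_repr (R.rootSpanMem ℤ i), map_sum]
  simp only [coeff, toWeightBasisInt_apply, map_smul, smul_eq_mul]

lemma isClosedSymmetricSubsystem_of_dvd_coeff (a : b.support) (n : ℤ) :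
    IsClosedSymmetricSubsystem (Set.range R.root) (R.root '' {i | n ∣ coeff b i a}) := by
  refine ⟨Set.image_subset_range _ _, ?_, ?_⟩
  · rintro - ⟨i, hi, rfl⟩
    refine ⟨R.reflectionPerm i i, ?_, by simp⟩
    rw [Set.mem_ofPred, coeff_reflectionPerm_self]
    exact hi.neg_right
  · rintro - ⟨i, hi, rfl⟩ - ⟨j, hj, rfl⟩ ⟨k, hk⟩
    refine ⟨k, ?_, hk⟩
    rw [Set.mem_ofPred, coeff_eq_add b hk]
    exact dvd_add hi hj

end Coefficients

section Steps

variable {ι M N : Type*} [AddCommGroup M] [Module ℂ M] [AddCommGroup N] [Module ℂ N]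
  {R : RootPairing ι ℂ M N} (b : R.Base)

/-- The simple roots of the base `b`, as elements of the root space. -/
def simpleRoot : b.support ↪ M := (Function.Embedding.subtype _).trans R.root

lemma sum_embDomain_simpleRoot (c : b.support →₀ ℤ) :
    (c.embDomain (simpleRoot b)).sum (fun v n ↦ n • v) = (b.toWeightBasisInt.repr.symm c : M) := by
  rw [Finsupp.sum_embDomain, Basis.repr_symm_apply, Finsupp.linearCombination_apply, Finsupp.sum,
    Finsupp.sum, AddSubmonoidClass.coe_finsetSum]
  simp only [SetLike.val_smul, Base.coe_toWeightBasisInt_apply]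
  rfl

lemma exists_support_subset_and_root_eq_sum_iff (p : (M →₀ ℤ) → Prop) (i : ι) :
    (∃ c : M →₀ ℤ, ↑c.support ⊆ Set.range (simpleRoot b) ∧
        R.root i = c.sum (fun v n ↦ n • v) ∧ p c) ↔
      p ((b.toWeightBasisInt.repr (R.rootSpanMem ℤ i)).embDomain (simpleRoot b)) := by
  refine ⟨fun ⟨c, c_support, hc, hpc⟩ ↦ ?_, fun h ↦ ⟨_, ?_, ?_, h⟩⟩
  · have sum_eq := sum_embDomain_simpleRoot b
      (c.comapDomain (simpleRoot b) (simpleRoot b).injective.injOn)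
    rw [Finsupp.embDomain_comapDomain c_support, ← hc] at sum_eq
    rw [show R.rootSpanMem ℤ i = _ from Subtype.ext sum_eq, LinearEquiv.apply_symm_apply,
      Finsupp.embDomain_comapDomain c_support]
    exact hpc
  · rw [Finsupp.support_embDomain, Finset.coe_map]
    exact Set.image_subset_range _ _
  · rw [sum_embDomain_simpleRoot, LinearEquiv.symm_apply_apply]

lemma isSimpleSystem_range_simpleRoot :
    IsSimpleSystem (Set.range R.root) (Set.range (simpleRoot b)) := by
  refine ⟨Set.range_comp_subset_range _ R.root,
    LinearIndependent.linearIndepOn_id b.linearIndepOn_root, ?_⟩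
  rintro - ⟨i, rfl⟩
  rw [exists_support_subset_and_root_eq_sum_iff b fun c ↦ (∀ v, 0 ≤ c v) ∨ ∀ v, c v ≤ 0]
  have embDomain_sign {r : ℤ → Prop} (r_zero : r 0) (hr : ∀ a, r (coeff b i a)) (v : M) :
      r ((b.toWeightBasisInt.repr (R.rootSpanMem ℤ i)).embDomain (simpleRoot b) v) := by
    by_cases hv : v ∈ Set.range (simpleRoot b)
    · obtain ⟨a, rfl⟩ := hv
      rw [Finsupp.embDomain_apply_self]
      exact hr a
    · rwa [Finsupp.embDomain_of_notMem_range _ _ _ hv]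
  exact (coeff_nonneg_or_nonpos b i).imp (embDomain_sign (r := (0 ≤ ·)) le_rfl)
    (embDomain_sign (r := (· ≤ 0)) le_rfl)

lemma dynkinStep_of_dvd_coeff (a : b.support) {n : ℕ} (hn : 0 < n) :
    DynkinStep (Set.range R.root) (R.root '' {i | (n : ℤ) ∣ coeff b i a}) := by
  refine ⟨_, isSimpleSystem_range_simpleRoot b, simpleRoot b a, ⟨a, rfl⟩, n, hn, ?_⟩
  have dvd_coeff_iff (i : ι) := exists_support_subset_and_root_eq_sum_iff b
    (fun c ↦ (n : ℤ) ∣ c (simpleRoot b a)) i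
  simp only [Finsupp.embDomain_apply_self] at dvd_coeff_iff
  ext v
  constructor
  · rintro ⟨i, hi, rfl⟩
    exact ⟨⟨i, rfl⟩, (dvd_coeff_iff i).mpr hi⟩
  · rintro ⟨⟨i, rfl⟩, hi⟩
    exact ⟨i, (dvd_coeff_iff i).mp hi, rfl⟩

lemma root_mem_closure_image_compl_iff (a : b.support) (i : ι) :
    R.root i ∈ AddSubgroup.closure (simpleRoot b '' {a}ᶜ) ↔ coeff b i a = 0 := by
  have image_eq : simpleRoot b '' {a}ᶜ =
      (R.rootSpan ℤ).subtype '' (b.toWeightBasisInt '' {a}ᶜ) := by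
    simp only [Set.image_image, Submodule.subtype_apply, Base.coe_toWeightBasisInt_apply]
    rfl
  have mem_map_iff : R.root i ∈ (Submodule.span ℤ (b.toWeightBasisInt '' {a}ᶜ)).map
      (R.rootSpan ℤ).subtype ↔ R.rootSpanMem ℤ i ∈ Submodule.span ℤ (b.toWeightBasisInt '' {a}ᶜ) :=
    (R.rootSpan ℤ).injective_subtype.mem_set_image (a := R.rootSpanMem ℤ i)
  rw [← Submodule.span_int_eq_addSubgroupClosure, Submodule.mem_toAddSubgroup, image_eq,
    Submodule.span_image, mem_map_iff, Basis.mem_span_image, Set.subset_compl_singleton_iff,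
    Finset.mem_coe, Finsupp.notMem_support_iff, coeff]

lemma leviStep_of_coeff_eq_zero (a : b.support) :
    LeviStep (Set.range R.root) (R.root '' {i | coeff b i a = 0}) := by
  refine ⟨_, _, isSimpleSystem_range_simpleRoot b, Set.image_subset_range _ {a}ᶜ, ?_⟩
  simp only [← root_mem_closure_image_compl_iff]
  exact Set.image_preimage_eq_range_inter

lemma leviStep_or_dynkinStep_of_dvd_coeff (a : b.support) (n : ℕ) :
    LeviStep (Set.range R.root) (R.root '' {i | (n : ℤ) ∣ coeff b i a}) ∨
      DynkinStep (Set.range R.root) (R.root '' {i | (n : ℤ) ∣ coeff b i a}) := by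
  obtain rfl | hn := n.eq_zero_or_pos
  · left
    simpa only [Nat.cast_zero, zero_dvd_iff] using leviStep_of_coeff_eq_zero b a
  · exact .inr (dynkinStep_of_dvd_coeff b a hn)

end Steps

section Dominant

variable {ι K M N : Type*} [Finite ι] [Field K] [CharZero K] [AddCommGroup M] [Module K M]
  [AddCommGroup N] [Module K N] {R : RootPairing ι K M N} [R.IsCrystallographic] {b : R.Base}

lemma pairingIn_nonneg_comm {i j : ι} : 0 ≤ R.pairingIn ℤ i j ↔ 0 ≤ R.pairingIn ℤ j i := by
  rw [← not_lt, R.pairingIn_lt_zero_iff ℤ, not_lt]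

omit [Finite ι] in
lemma sum_coeff_mul_pairingIn (b : R.Base) (i j : ι) :
    ∑ a, coeff b i a * R.pairingIn ℤ a j = R.pairingIn ℤ i j :=
  sum_coeff_mul b (R.coroot'In ℤ j) i

variable (b) in
/-- A root is dominant with respect to a base if it pairs nonnegatively with all simple coroots. -/
def IsDominant (t : ι) : Prop := ∀ a : b.support, 0 ≤ R.pairingIn ℤ t a

lemma IsDominant.coeff_nonneg {t : ι} (ht : IsDominant b t) : 0 ≤ coeff b t := by
  refine (coeff_nonneg_or_nonpos b t).resolve_right fun h ↦ ?_
  have : R.pairingIn ℤ t t ≤ 0 := by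
    rw [← sum_coeff_mul_pairingIn b]
    exact Finset.sum_nonpos fun a _ ↦
      mul_nonpos_of_nonpos_of_nonneg (h a) (pairingIn_nonneg_comm.mp (ht a))
  simp at this

lemma isDominant_of_maximal {t : ι} (ht : Maximal (· ∈ Set.range (coeff b)) (coeff b t))
    (t_nonneg : 0 ≤ coeff b t) : IsDominant b t := by
  intro a
  by_contra! pairing_neg
  have root_ne : R.root t ≠ -R.root a := fun h' ↦ by
    have t_eq : t = R.reflectionPerm a a := R.root.injective (by simp [h'])
    have := t_nonneg a
    rw [t_eq, coeff_reflectionPerm_self, Pi.neg_apply, coeff_self] at this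
    norm_num at this
  obtain ⟨k, hk⟩ := R.root_add_root_mem_of_pairingIn_neg pairing_neg root_ne
  have := ht.le_of_ge ⟨k, rfl⟩ <| by
    rw [coeff_eq_add b hk]
    exact le_add_of_nonneg_right (coeff_nonneg_of_mem_support b a.2)
  have := this a
  rw [coeff_eq_add b hk, Pi.add_apply, coeff_self] at this
  exact (lt_add_one _).not_ge this

lemma exists_isDominant_ge {i : ι} (hi : 0 ≤ coeff b i) :
    ∃ t, IsDominant b t ∧ coeff b i ≤ coeff b t := by
  obtain ⟨-, hle, ⟨t, rfl⟩, ht⟩ :=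
    (Set.finite_range (coeff b)).exists_le_maximal ⟨i, rfl⟩
  exact ⟨t, isDominant_of_maximal ⟨⟨t, rfl⟩, ht⟩ (hi.trans hle), hle⟩

lemma IsDominant.pairingIn_eq_zero {t : ι} (ht : IsDominant b t) {a k : b.support}
    (ha : 0 < coeff b t a) (hk : coeff b t k = 0) : R.pairingIn ℤ a k = 0 := by
  have term_nonpos (e : b.support) : coeff b t e * R.pairingIn ℤ e k ≤ 0 := by
    obtain rfl | hne := eq_or_ne e k
    · simp [hk]
    · exact mul_nonpos_of_nonneg_of_nonpos (ht.coeff_nonneg e)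
        (b.pairingIn_le_zero_of_ne (Subtype.coe_injective.ne hne) e.2 k.2)
  have sum_eq : ∑ e, coeff b t e * R.pairingIn ℤ e k = 0 :=
    le_antisymm (Finset.sum_nonpos fun e _ ↦ term_nonpos e)
      (sum_coeff_mul_pairingIn b t k ▸ ht k)
  have := (Finset.sum_eq_zero_iff_of_nonpos fun e _ ↦ term_nonpos e).mp sum_eq a (Finset.mem_univ a)
  exact (mul_eq_zero.mp this).resolve_left ha.ne'

omit [Finite ι] [CharZero K] in
lemma rootSpanMem_reflectionPerm (i j : ι) :
    R.rootSpanMem ℤ (R.reflectionPerm j i) =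
      R.rootSpanMem ℤ i - R.pairingIn ℤ i j • R.rootSpanMem ℤ j :=
  Subtype.ext <| by
    change R.root (R.reflectionPerm j i) = R.root i - R.pairingIn ℤ i j • R.root j
    rw [root_reflectionPerm, R.reflection_apply_root' ℤ]

omit [Finite ι] in
lemma coeff_reflectionPerm (i j : ι) :
    coeff b (R.reflectionPerm j i) = coeff b i - R.pairingIn ℤ i j • coeff b j := by
  ext a
  simp only [coeff, rootSpanMem_reflectionPerm, map_sub, map_smul, Finsupp.sub_apply,
    Finsupp.smul_apply, Pi.sub_apply, Pi.smul_apply]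

lemma IsDominant.pairingIn_eq_zero_of_support_subset {t : ι} (ht : IsDominant b t) {i : ι}
    (hi : ∀ a, coeff b t a = 0 → coeff b i a = 0) {k : b.support} (hk : coeff b t k = 0) :
    R.pairingIn ℤ i k = 0 := by
  rw [← sum_coeff_mul_pairingIn b]
  refine Finset.sum_eq_zero fun a _ ↦ ?_
  obtain h | h := (ht.coeff_nonneg a).eq_or_lt
  · rw [hi a h.symm, zero_mul]
  · rw [ht.pairingIn_eq_zero h hk, mul_zero]

lemma IsDominant.pairingIn_eq_zero_of_support_disjoint {t : ι} (ht : IsDominant b t) {i : ι}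
    (hi : ∀ a, 0 < coeff b t a → coeff b i a = 0) {k : b.support} (hk : 0 < coeff b t k) :
    R.pairingIn ℤ i k = 0 := by
  rw [← sum_coeff_mul_pairingIn b]
  refine Finset.sum_eq_zero fun a _ ↦ ?_
  obtain h | h := (ht.coeff_nonneg a).eq_or_lt
  · rw [R.pairingIn_eq_zero_iff.mpr (ht.pairingIn_eq_zero hk h.symm), mul_zero]
  · rw [hi a h, zero_mul]

lemma IsDominant.support_subset_or_disjoint [R.IsReduced] {t : ι} (ht : IsDominant b t) (i : ι) :
    (∀ a, coeff b t a = 0 → coeff b i a = 0) ∨ ∀ a, 0 < coeff b t a → coeff b i a = 0 := by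
  refine b.induction_reflect (p := fun i ↦ (∀ a, coeff b t a = 0 → coeff b i a = 0) ∨
    ∀ a, 0 < coeff b t a → coeff b i a = 0) i (fun j hj ↦ ?_) (fun j hj ↦ ?_) (fun j k hj hk ↦ ?_)
  · simpa only [coeff_reflectionPerm_self, Pi.neg_apply, neg_eq_zero] using hj
  · obtain h | h := (ht.coeff_nonneg ⟨j, hj⟩).eq_or_lt
    · exact Or.inr fun a ha ↦ coeff_of_ne b (a := ⟨j, hj⟩) fun h' ↦ ha.ne (h' ▸ h)
    · exact Or.inl fun a ha ↦ coeff_of_ne b (a := ⟨j, hj⟩) fun h' ↦ h.ne' (h' ▸ ha)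
  · lift k to b.support using hk
    obtain h | h := (ht.coeff_nonneg k).eq_or_lt
    · refine hj.imp (fun hj a ha ↦ ?_) (fun hj a ha ↦ ?_)
      · rw [coeff_reflectionPerm, ht.pairingIn_eq_zero_of_support_subset hj h.symm, zero_smul,
          sub_zero, hj a ha]
      · rw [coeff_reflectionPerm, Pi.sub_apply, Pi.smul_apply, hj a ha,
          coeff_of_ne b (a := k) (e := a) fun h' ↦ ha.ne (h' ▸ h), smul_zero, sub_zero]
    · refine hj.imp (fun hj a ha ↦ ?_) (fun hj a ha ↦ ?_)
      · rw [coeff_reflectionPerm, Pi.sub_apply, Pi.smul_apply, hj a ha,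
          coeff_of_ne b (a := k) (e := a) fun h' ↦ h.ne' (h' ▸ ha), smul_zero, sub_zero]
      · rw [coeff_reflectionPerm, ht.pairingIn_eq_zero_of_support_disjoint hj h, zero_smul,
          sub_zero, hj a ha]

lemma IsDominant.pairingIn_pos [R.IsReduced] {t u : ι} (ht : IsDominant b t) (hu : IsDominant b u)
    {a : b.support} (hta : 0 < coeff b t a) (hua : 0 < coeff b u a) :
    0 < R.pairingIn ℤ u t := by
  have simple_nonneg (e : b.support) : 0 ≤ R.pairingIn ℤ e t := pairingIn_nonneg_comm.mp (ht e)
  have term_nonneg (e : b.support) : 0 ≤ coeff b u e * R.pairingIn ℤ e t :=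
    mul_nonneg (hu.coeff_nonneg e) (simple_nonneg e)
  obtain ⟨e, he⟩ : ∃ e, 0 < coeff b t e * R.pairingIn ℤ e t := by
    by_contra! h
    have : R.pairingIn ℤ t t ≤ 0 :=
      sum_coeff_mul_pairingIn b t t ▸ Finset.sum_nonpos fun e _ ↦ h e
    simp at this
  have hue : 0 < coeff b u e := by
    refine (hu.coeff_nonneg e).lt_of_ne' fun hue ↦ ?_
    obtain h | h := hu.support_subset_or_disjoint t
    · simp [h e hue] at he
    · exact hta.ne' (h a hua)
  rw [← sum_coeff_mul_pairingIn b]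
  exact Finset.sum_pos' (fun e _ ↦ term_nonneg e) ⟨e, Finset.mem_univ e,
    mul_pos hue (pos_of_mul_pos_right he (ht.coeff_nonneg e))⟩

end Dominant

section Maximal

variable {ι K M N : Type*} [Field K] [CharZero K] [AddCommGroup M] [Module K M]
  [AddCommGroup N] [Module K N] {R : RootPairing ι K M N} {b : R.Base}
  {z : R.rootSpan ℤ →ₗ[ℤ] ℤ} (hz : ∀ a ∈ b.support, 0 ≤ z (R.rootSpanMem ℤ a))

include hz

lemma apply_le_of_coeff_le {i j : ι} (hij : coeff b i ≤ coeff b j) :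
    z (R.rootSpanMem ℤ i) ≤ z (R.rootSpanMem ℤ j) := by
  rw [← sum_coeff_mul b z i, ← sum_coeff_mul b z j]
  exact Finset.sum_le_sum fun a _ ↦ mul_le_mul_of_nonneg_right (hij a) (hz a a.2)

lemma coeff_mul_le_apply {i : ι} (hi : 0 ≤ coeff b i) (a : b.support) :
    coeff b i a * z (R.rootSpanMem ℤ a) ≤ z (R.rootSpanMem ℤ i) := by
  rw [← sum_coeff_mul b z i]
  exact Finset.single_le_sum (f := fun a ↦ coeff b i a * z (R.rootSpanMem ℤ a))
    (fun e _ ↦ mul_nonneg (hi e) (hz e e.2)) (Finset.mem_univ a)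

lemma coeff_eq_of_coeff_le {i j : ι} (hij : coeff b i ≤ coeff b j)
    (hz_le : z (R.rootSpanMem ℤ j) ≤ z (R.rootSpanMem ℤ i)) {a : b.support}
    (ha : 0 < z (R.rootSpanMem ℤ a)) : coeff b i a = coeff b j a := by
  refine (hij a).antisymm <| not_lt.mp fun hlt ↦ hz_le.not_gt ?_
  rw [← sum_coeff_mul b z i, ← sum_coeff_mul b z j]
  exact Finset.sum_lt_sum (fun e _ ↦ mul_le_mul_of_nonneg_right (hij e) (hz e e.2))
    ⟨a, Finset.mem_univ a, mul_lt_mul_of_pos_right hlt ha⟩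

lemma IsDominant.coeff_eq_of_forall_le [Finite ι] [R.IsCrystallographic] [R.IsReduced] {t u : ι}
    (t_dom : IsDominant b t) (u_dom : IsDominant b u)
    (ht : ∀ k, z (R.rootSpanMem ℤ k) ≤ z (R.rootSpanMem ℤ t))
    (hu : ∀ k, z (R.rootSpanMem ℤ k) ≤ z (R.rootSpanMem ℤ u)) {a : b.support}
    (hta : 0 < coeff b t a) (hua : 0 < coeff b u a) {e : b.support}
    (he : 0 < z (R.rootSpanMem ℤ e)) : coeff b t e = coeff b u e := by
  obtain rfl | hne := eq_or_ne t u
  · rfl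
  obtain ⟨k, hk⟩ := R.root_sub_root_mem_of_pairingIn_pos (u_dom.pairingIn_pos t_dom hua hta) hne
  have coeff_t : coeff b t = coeff b k + coeff b u := coeff_eq_add b (by rw [hk, sub_add_cancel])
  obtain hk | hk := coeff_nonneg_or_nonpos b k
  · exact (coeff_eq_of_coeff_le hz (coeff_t ▸ le_add_of_nonneg_left hk) (hu t) he).symm
  · exact coeff_eq_of_coeff_le hz (coeff_t ▸ add_le_of_nonpos_left hk) (ht u) he

lemma coeff_eq_of_forall_le [Finite ι] [R.IsCrystallographic] [R.IsReduced] {i j : ι}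
    (hi : ∀ k, z (R.rootSpanMem ℤ k) ≤ z (R.rootSpanMem ℤ i))
    (hj : ∀ k, z (R.rootSpanMem ℤ k) ≤ z (R.rootSpanMem ℤ j)) {a : b.support}
    (hia : 0 < coeff b i a) (hja : 0 < coeff b j a) {e : b.support}
    (he : 0 < z (R.rootSpanMem ℤ e)) : coeff b i e = coeff b j e := by
  have nonneg {k : ι} (hk : 0 < coeff b k a) : 0 ≤ coeff b k :=
    (coeff_nonneg_or_nonpos b k).resolve_right fun h ↦ (h a).not_gt hk
  obtain ⟨t, t_dom, hit⟩ := exists_isDominant_ge (nonneg hia)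
  obtain ⟨u, u_dom, hju⟩ := exists_isDominant_ge (nonneg hja)
  calc coeff b i e = coeff b t e := coeff_eq_of_coeff_le hz hit (hi t) he
    _ = coeff b u e := t_dom.coeff_eq_of_forall_le hz u_dom
        (fun k ↦ (hi k).trans (apply_le_of_coeff_le hz hit))
        (fun k ↦ (hj k).trans (apply_le_of_coeff_le hz hju))
        (hia.trans_le (hit a)) (hja.trans_le (hju a)) he
    _ = coeff b j e := (coeff_eq_of_coeff_le hz hju (hj u) he).symm

end Maximal

section Translation

variable {ι K M N : Type*} [Field K] [CharZero K] [AddCommGroup M] [Module K M]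
  [AddCommGroup N] [Module K N] (R : RootPairing ι K M N) [R.IsCrystallographic]

omit [CharZero K] in
lemma two_mul_sum_apply_mul_pairingIn [Fintype ι] (z : R.rootSpan ℤ →ₗ[ℤ] ℤ) (j : ι) :
    2 * ∑ i, z (R.rootSpanMem ℤ i) * R.pairingIn ℤ i j =
      z (R.rootSpanMem ℤ j) * ∑ i, R.pairingIn ℤ i j ^ 2 := by
  have in_rootSpan : (∑ i, R.pairingIn ℤ i j ^ 2) • R.rootSpanMem ℤ j =
      2 • ∑ i, R.pairingIn ℤ i j • R.rootSpanMem ℤ i := by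
    refine Subtype.ext ?_
    have := R.corootForm_self_smul_root j
    simp only [corootForm_apply_apply, CoPolarization_apply, root'_coroot_eq_pairing,
      ← R.algebraMap_pairingIn ℤ] at this
    simpa [← Int.cast_smul_eq_zsmul K, sq] using this
  have := congrArg z in_rootSpan
  simp only [map_smul, map_nsmul, map_sum, smul_eq_mul, nsmul_eq_mul, Nat.cast_ofNat] at this
  simp only [mul_comm (z _), this]

lemma exists_forall_apply_le [Finite ι] (z₀ : R.rootSpan ℤ →ₗ[ℤ] ℤ) {D : ℤ} (hD : 0 < D) :
    ∃ z : R.rootSpan ℤ →ₗ[ℤ] ℤ, (∀ v, D ∣ z v - z₀ v) ∧ ∀ i, z (R.rootSpanMem ℤ i) ≤ D := by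
  have := Fintype.ofFinite ι
  obtain ⟨z, hz, z_min⟩ := exists_minimalFor_of_wellFoundedLT
    (fun z : R.rootSpan ℤ →ₗ[ℤ] ℤ ↦ ∀ v, D ∣ z v - z₀ v)
    (fun z ↦ ∑ i, (z (R.rootSpanMem ℤ i)).natAbs ^ 2) ⟨z₀, by simp⟩
  refine ⟨z, hz, fun j ↦ not_lt.mp fun hj ↦ ?_⟩
  have pos : 0 < ∑ i, R.pairingIn ℤ i j ^ 2 :=
    Finset.sum_pos' (fun i _ ↦ sq_nonneg _) ⟨j, Finset.mem_univ j, by simp⟩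
  let z' : R.rootSpan ℤ →ₗ[ℤ] ℤ := z - D • R.coroot'In ℤ j
  have z'_root (i : ι) :
      z' (R.rootSpanMem ℤ i) = z (R.rootSpanMem ℤ i) - D * R.pairingIn ℤ i j := rfl
  have expand : ∑ i, z' (R.rootSpanMem ℤ i) ^ 2 = ∑ i, z (R.rootSpanMem ℤ i) ^ 2 -
      D * (z (R.rootSpanMem ℤ j) - D) * ∑ i, R.pairingIn ℤ i j ^ 2 := by
    calc ∑ i, z' (R.rootSpanMem ℤ i) ^ 2
        = ∑ i, z (R.rootSpanMem ℤ i) ^ 2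
            - D * (2 * ∑ i, z (R.rootSpanMem ℤ i) * R.pairingIn ℤ i j)
            + D ^ 2 * ∑ i, R.pairingIn ℤ i j ^ 2 := by
          simp only [z'_root, Finset.mul_sum, ← Finset.sum_sub_distrib, ← Finset.sum_add_distrib]
          exact Finset.sum_congr rfl fun i _ ↦ by ring
      _ = _ := by rw [two_mul_sum_apply_mul_pairingIn]; ring
  have le : ∑ i, z (R.rootSpanMem ℤ i) ^ 2 ≤ ∑ i, z' (R.rootSpanMem ℤ i) ^ 2 := by
    have hz' (v) : D ∣ z' v - z₀ v := by
      rw [show z' v - z₀ v = z v - z₀ v - D * R.coroot'In ℤ j v from sub_right_comm _ _ _]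
      exact (hz v).sub (dvd_mul_right _ _)
    by_contra! lt
    exact (Nat.cast_lt (α := ℤ).mp (by simpa using lt)).not_ge
      (z_min hz' (Nat.cast_le (α := ℤ).mp (by simpa using lt.le)))
  exact (expand ▸ le).not_gt (sub_lt_self _ (mul_pos (mul_pos hD (sub_pos.mpr hj)) pos))

end Translation

section Congruence

variable {ι K M N : Type*} [Finite ι] [Field K] [CharZero K] [AddCommGroup M] [Module K M]
  [AddCommGroup N] [Module K N] {R : RootPairing ι K M N} [R.IsCrystallographic] [R.IsReduced]

omit [Finite ι] [R.IsCrystallographic] [R.IsReduced] in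
lemma exists_simple_not_dvd {b : R.Base} {z : R.rootSpan ℤ →ₗ[ℤ] ℤ} {D : ℤ} {q : ι}
    (hq : ¬ D ∣ z (R.rootSpanMem ℤ q)) : ∃ a : b.support, ¬ D ∣ z (R.rootSpanMem ℤ a) := by
  contrapose! hq
  rw [← sum_coeff_mul b z q]
  exact Finset.dvd_sum fun a _ ↦ (hq a).mul_left _

lemma exists_coeff_eq_zero_of_apply_eq_zero {z : R.rootSpan ℤ →ₗ[ℤ] ℤ} {q : ι}
    (hq : z (R.rootSpanMem ℤ q) ≠ 0) :
    ∃ (b : R.Base) (a : b.support), ∀ i, z (R.rootSpanMem ℤ i) = 0 → coeff b i a = 0 := by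
  obtain ⟨b, hb⟩ := exists_base_forall_nonneg R z
  obtain ⟨a, ha⟩ := exists_simple_not_dvd (b := b) (zero_dvd_iff.not.mpr hq)
  have a_pos := (hb a a.2).lt_of_ne' (zero_dvd_iff.not.mp ha)
  refine ⟨b, a, fun i hi ↦ ?_⟩
  wlog i_nonneg : 0 ≤ coeff b i generalizing i
  · have := this (R.reflectionPerm i i)
      (by rw [rootSpanMem_reflectionPerm_self, map_neg, hi, neg_zero])
      (coeff_reflectionPerm_self_nonneg b i_nonneg)
    rwa [coeff_reflectionPerm_self, Pi.neg_apply, neg_eq_zero] at this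
  have := (coeff_mul_le_apply hb i_nonneg a).trans_eq hi
  exact (nonpos_of_mul_nonpos_left this a_pos).antisymm (i_nonneg a)

variable {b : R.Base} {z : R.rootSpan ℤ →ₗ[ℤ] ℤ} {D : ℤ}

lemma exists_coeff_eq_mul_coeff (hb : ∀ a ∈ b.support, 0 ≤ z (R.rootSpanMem ℤ a))
    (hz : ∀ k, z (R.rootSpanMem ℤ k) ≤ D) {c i : ι} (c_nonneg : 0 ≤ coeff b c)
    (hc : D ∣ z (R.rootSpanMem ℤ c)) (hi : D ∣ z (R.rootSpanMem ℤ i)) :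
    ∃ s : ℤ, ∀ e : b.support, 0 < z (R.rootSpanMem ℤ e) → 0 < coeff b c e →
      coeff b i e = s * coeff b c e := by
  wlog i_nonneg : 0 ≤ coeff b i generalizing i
  · obtain ⟨s, hs⟩ := this (i := R.reflectionPerm i i)
      (by rwa [rootSpanMem_reflectionPerm_self, map_neg, dvd_neg])
      (coeff_reflectionPerm_self_nonneg b i_nonneg)
    refine ⟨-s, fun e he hce ↦ ?_⟩
    rw [neg_mul, ← hs e he hce, coeff_reflectionPerm_self, Pi.neg_apply, neg_neg]
  by_cases! overlap : ∃ e : b.support,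
      0 < z (R.rootSpanMem ℤ e) ∧ 0 < coeff b c e ∧ coeff b i e ≠ 0
  · obtain ⟨a, ha, hca, hia⟩ := overlap
    replace hia := (i_nonneg a).lt_of_ne' hia
    have maximal {j : ι} (hj : D ∣ z (R.rootSpanMem ℤ j)) (j_nonneg : 0 ≤ coeff b j)
        (hja : 0 < coeff b j a) (k : ι) : z (R.rootSpanMem ℤ k) ≤ z (R.rootSpanMem ℤ j) :=
      (hz k).trans <| Int.le_of_dvd
        ((mul_pos hja ha).trans_le (coeff_mul_le_apply hb j_nonneg a)) hj
    refine ⟨1, fun e he _ ↦ ?_⟩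
    rw [one_mul]
    exact coeff_eq_of_forall_le hb (maximal hi i_nonneg hia) (maximal hc c_nonneg hca) hia hca he
  · exact ⟨0, fun e he hce ↦ by rw [overlap e he hce, zero_mul]⟩

omit [Finite ι] [R.IsCrystallographic] [R.IsReduced] in
lemma exists_ne_apply_pos_of_coeff_eq_one (hb : ∀ a ∈ b.support, 0 ≤ z (R.rootSpanMem ℤ a))
    {c : ι} {a : b.support} (c_nonneg : 0 ≤ coeff b c) (hca : coeff b c a = 1)
    (hza : z (R.rootSpanMem ℤ c) ≠ z (R.rootSpanMem ℤ a)) :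
    ∃ e ≠ a, 0 < z (R.rootSpanMem ℤ e) ∧ 0 < coeff b c e := by
  contrapose! hza
  rw [← sum_coeff_mul b z c, Finset.sum_eq_single a _ (by simp), hca, one_mul]
  intro e _ hea
  obtain he | he := (hb e e.2).eq_or_lt
  · rw [← he, mul_zero]
  · rw [(hza e hea he).antisymm (c_nonneg e), zero_mul]

lemma exists_coeff_eq_zero_of_coeff_eq_one (hb : ∀ a ∈ b.support, 0 ≤ z (R.rootSpanMem ℤ a))
    (hz : ∀ k, z (R.rootSpanMem ℤ k) ≤ D) {c : ι} {a : b.support}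
    (c_nonneg : 0 ≤ coeff b c) (hc : D ∣ z (R.rootSpanMem ℤ c)) (hca : coeff b c a = 1)
    (ha : ¬ D ∣ z (R.rootSpanMem ℤ a)) :
    ∃ (b' : R.Base) (a' : b'.support), ∀ i, D ∣ z (R.rootSpanMem ℤ i) → coeff b' i a' = 0 := by
  obtain ⟨e, hea, he, hce⟩ :=
    exists_ne_apply_pos_of_coeff_eq_one hb c_nonneg hca fun h ↦ ha (h ▸ hc)
  have a_pos := (hb a a.2).lt_of_ne' fun h ↦ ha (h ▸ dvd_zero D)
  let f := b.toWeightBasisInt.coord e - coeff b c e • b.toWeightBasisInt.coord a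
  have f_root (i : ι) : f (R.rootSpanMem ℤ i) = coeff b i e - coeff b c e * coeff b i a := rfl
  have f_ne : f (R.rootSpanMem ℤ e) ≠ 0 := by
    rw [f_root, coeff_self, coeff_of_ne b hea, mul_zero, sub_zero]
    exact one_ne_zero
  obtain ⟨b', a', h⟩ := exists_coeff_eq_zero_of_apply_eq_zero f_ne
  refine ⟨b', a', fun i hi ↦ h i ?_⟩
  obtain ⟨s, hs⟩ := exists_coeff_eq_mul_coeff hb hz c_nonneg hc hi
  rw [f_root, hs e he hce, hs a a_pos (hca ▸ one_pos), hca, mul_one, mul_comm, sub_self]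

lemma exists_dvd_coeff_of_forall_le (hz : ∀ k, z (R.rootSpanMem ℤ k) ≤ D) {q : ι}
    (hq : ¬ D ∣ z (R.rootSpanMem ℤ q)) :
    ∃ (b : R.Base) (a : b.support) (n : ℕ), n ≠ 1 ∧
      ∀ i, D ∣ z (R.rootSpanMem ℤ i) → (n : ℤ) ∣ coeff b i a := by
  obtain ⟨b, hb⟩ := exists_base_forall_nonneg R z
  obtain ⟨a, ha⟩ := exists_simple_not_dvd (b := b) hq
  have a_pos := (hb a a.2).lt_of_ne' fun h ↦ ha (h ▸ dvd_zero D)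
  by_cases! vanish : ∀ i, D ∣ z (R.rootSpanMem ℤ i) → coeff b i a ≤ 0
  · refine ⟨b, a, 0, zero_ne_one, fun i hi ↦ zero_dvd_iff.mpr ((vanish i hi).antisymm ?_)⟩
    have := vanish (R.reflectionPerm i i)
      (by rwa [rootSpanMem_reflectionPerm_self, map_neg, dvd_neg])
    rwa [coeff_reflectionPerm_self, Pi.neg_apply, neg_nonpos] at this
  obtain ⟨c, hc, hca⟩ := vanish
  have c_nonneg := (coeff_nonneg_or_nonpos b c).resolve_right fun h ↦ (h a).not_gt hca
  by_cases hn : coeff b c a = 1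
  · obtain ⟨b', a', h⟩ := exists_coeff_eq_zero_of_coeff_eq_one hb hz c_nonneg hc hn ha
    exact ⟨b', a', 0, zero_ne_one, fun i hi ↦ zero_dvd_iff.mpr (h i hi)⟩
  · refine ⟨b, a, (coeff b c a).toNat, by omega, fun i hi ↦ ?_⟩
    obtain ⟨s, hs⟩ := exists_coeff_eq_mul_coeff hb hz c_nonneg hc hi
    rw [Int.toNat_of_nonneg hca.le, hs a a_pos hca]
    exact dvd_mul_left _ s

lemma exists_dvd_coeff_of_dvd {q : ι} (hq : ¬ D ∣ z (R.rootSpanMem ℤ q)) :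
    ∃ (b : R.Base) (a : b.support) (n : ℕ), n ≠ 1 ∧
      ∀ i, D ∣ z (R.rootSpanMem ℤ i) → (n : ℤ) ∣ coeff b i a := by
  obtain rfl | hD := eq_or_ne D 0
  · simp only [zero_dvd_iff] at hq ⊢
    obtain ⟨b, a, h⟩ := exists_coeff_eq_zero_of_apply_eq_zero hq
    exact ⟨b, a, 0, zero_ne_one, fun i hi ↦ zero_dvd_iff.mpr (h i hi)⟩
  · obtain ⟨z', hz', z'_le⟩ := exists_forall_apply_le R z (abs_pos.mpr hD)
    have dvd_iff (i : ι) : |D| ∣ z' (R.rootSpanMem ℤ i) ↔ D ∣ z (R.rootSpanMem ℤ i) := by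
      rw [dvd_iff_dvd_of_dvd_sub (hz' _), abs_dvd]
    simpa only [dvd_iff] using
      exists_dvd_coeff_of_forall_le z'_le ((dvd_iff q).not.mpr hq)

lemma exists_dvd_coeff_of_ne_range {P : Set M}
    (hP : IsClosedSymmetricSubsystem (Set.range R.root) P) (hne : P ≠ Set.range R.root) :
    ∃ (b : R.Base) (a : b.support) (n : ℕ), n ≠ 1 ∧
      ∀ i, R.root i ∈ P → (n : ℤ) ∣ coeff b i a := by
  obtain ⟨q, hq⟩ : ∃ q, R.root q ∉ P := by
    contrapose! hne
    exact hP.1.antisymm (Set.range_subset_iff.mpr hne)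
  let Λ := (AddSubgroup.closure P).toIntSubmodule.comap (R.rootSpan ℤ).subtype
  have := Module.Free.of_basis (Base.toWeightBasisInt (exists_base_forall_nonneg R 0).choose)
  obtain ⟨z, D, hΛ, hzq⟩ := exists_dual_forall_dvd_and_not_dvd (N := Λ)
    (x := R.rootSpanMem ℤ q) fun h ↦ hq (root_mem_of_mem_closure hP h)
  obtain ⟨b, a, n, hn, h⟩ := exists_dvd_coeff_of_dvd hzq
  exact ⟨b, a, n, hn, fun i hi ↦ h i (hΛ _ (AddSubgroup.subset_closure hi))⟩

end Congruence

section Chain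

lemma isClosedSymmetricSubsystem_trans {V : Type*} [AddCommGroup V] {A B C : Set V}
    (hB : IsClosedSymmetricSubsystem A B) (hC : IsClosedSymmetricSubsystem B C) :
    IsClosedSymmetricSubsystem A C :=
  ⟨hC.1.trans hB.1, hC.2.1, fun x hx y hy hxy ↦
    hC.2.2 x hx y hy (hB.2.2 x (hC.1 hx) y (hC.1 hy) hxy)⟩

lemma isClosedSymmetricSubsystem_of_subset {V : Type*} [AddCommGroup V] {A B C : Set V}
    (hC : IsClosedSymmetricSubsystem A C) (hBA : B ⊆ A) (hCB : C ⊆ B) :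
    IsClosedSymmetricSubsystem B C :=
  ⟨hCB, hC.2.1, fun x hx y hy hxy ↦ hC.2.2 x hx y hy (hBA hxy)⟩

variable {ι M N : Type*} [Finite ι] [AddCommGroup M] [Module ℂ M] [AddCommGroup N] [Module ℂ N]
  {R : RootPairing ι ℂ M N} [R.IsCrystallographic] [R.IsReduced] {P Q : Set M}

lemma exists_step_of_ne_range (hP : IsClosedSymmetricSubsystem (Set.range R.root) P)
    (hne : P ≠ Set.range R.root) :
    ∃ Q ⊂ Set.range R.root, P ⊆ Q ∧ IsClosedSymmetricSubsystem (Set.range R.root) Q ∧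
      (LeviStep (Set.range R.root) Q ∨ DynkinStep (Set.range R.root) Q) := by
  obtain ⟨b, a, n, hn, hPn⟩ := exists_dvd_coeff_of_ne_range hP hne
  refine ⟨R.root '' {i | (n : ℤ) ∣ coeff b i a}, ⟨Set.image_subset_range _ _, fun hsub ↦ hn ?_⟩,
    fun p hp ↦ ?_, isClosedSymmetricSubsystem_of_dvd_coeff b a n,
    leviStep_or_dynkinStep_of_dvd_coeff b a n⟩
  · obtain ⟨i, hi, hia⟩ := hsub ⟨a, rfl⟩
    rw [R.root.injective hia, Set.mem_ofPred, coeff_self] at hi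
    exact Nat.dvd_one.mp (by exact_mod_cast hi)
  · obtain ⟨i, rfl⟩ := hP.1 hp
    exact ⟨i, hPn i hp, rfl⟩

lemma exists_step_of_ne (hQ : IsClosedSymmetricSubsystem (Set.range R.root) Q)
    (hP : IsClosedSymmetricSubsystem Q P) (hne : P ≠ Q) :
    ∃ Q' ⊂ Q, P ⊆ Q' ∧ IsClosedSymmetricSubsystem (Set.range R.root) Q' ∧
      (LeviStep Q Q' ∨ DynkinStep Q Q') := by
  have range_root := range_root_subpairing hQ
  obtain ⟨Q', hlt, hPQ', hQ', step⟩ := exists_step_of_ne_range (R := subpairing R hQ)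
    (range_root.symm ▸ hP) (range_root.symm ▸ hne)
  rw [range_root] at hlt hQ' step
  exact ⟨Q', hlt, hPQ', isClosedSymmetricSubsystem_trans hQ hQ', step⟩

lemma exists_chain_of_subset (hP : IsClosedSymmetricSubsystem (Set.range R.root) P)
    (hQ : IsClosedSymmetricSubsystem (Set.range R.root) Q) (hPQ : P ⊆ Q) :
    ∃ (m : ℕ) (c : ℕ → Set M), c 0 = Q ∧ c m = P ∧
      (∀ j ≤ m, IsClosedSymmetricSubsystem (Set.range R.root) (c j)) ∧
      (∀ j < m, LeviStep (c j) (c (j + 1)) ∨ DynkinStep (c j) (c (j + 1))) := by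
  induction h : Q.ncard using Nat.strong_induction_on generalizing Q with
  | _ k ih =>
    subst h
    obtain rfl | hne := eq_or_ne P Q
    · exact ⟨0, fun _ ↦ P, rfl, rfl, fun _ _ ↦ hP, fun _ hj ↦ absurd hj (Nat.not_lt_zero _)⟩
    obtain ⟨Q', hlt, hPQ', hQ', step⟩ :=
      exists_step_of_ne hQ (isClosedSymmetricSubsystem_of_subset hP hQ.1 hPQ) hne
    have ncard_lt := Set.ncard_lt_ncard hlt ((Set.finite_range R.root).subset hQ.1)
    obtain ⟨m, c, c_zero, c_m, c_closed, c_step⟩ := ih _ ncard_lt hQ' hPQ' rfl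
    refine ⟨m + 1, fun j ↦ Nat.casesOn j Q c, rfl, c_m, ?_, ?_⟩
    · rintro (_ | j) hj
      · exact hQ
      · exact c_closed j (Nat.le_of_succ_le_succ hj)
    · rintro (_ | j) hj
      · change LeviStep Q (c 0) ∨ DynkinStep Q (c 0)
        rwa [c_zero]
      · exact c_step j (Nat.lt_of_succ_lt_succ hj)

end Chain

lemma lieRoots_eq_range_root (L : Type*) [LieRing L] [LieAlgebra ℂ L] [FiniteDimensional ℂ L]
    [IsKilling ℂ L] (H : LieSubalgebra ℂ L) [H.IsCartanSubalgebra] :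
    lieRoots L H = Set.range (IsKilling.rootSystem H).root := by
  ext α
  constructor
  · rintro ⟨α_ne, hα⟩
    let χ : LieModule.Weight ℂ H L := ⟨α, hα⟩
    have hχ : χ ∈ H.root := by
      rw [LieSubalgebra.root, Finset.mem_filter_univ]
      exact fun h ↦ α_ne (DFunLike.coe_injective h)
    exact ⟨⟨χ, hχ⟩, rfl⟩
  · rintro ⟨⟨χ, hχ⟩, rfl⟩
    rw [LieSubalgebra.root, Finset.mem_filter_univ] at hχ
    exact ⟨fun h ↦ hχ (congrArg DFunLike.coe h), χ.genWeightSpace_ne_bot⟩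

end DynkinChain

theorem dynkin_chain_exists_general {ι M N : Type*} [Finite ι] [AddCommGroup M] [Module ℂ M]
    [AddCommGroup N] [Module ℂ N] (R : RootPairing ι ℂ M N) [R.IsCrystallographic] [R.IsReduced]
    (P : Set M) (hP : IsClosedSymmetricSubsystem (Set.range R.root) P) :
    ∃ (m : ℕ) (c : ℕ → Set M),
      c 0 = Set.range R.root ∧ c m = P ∧
      (∀ j ≤ m, IsClosedSymmetricSubsystem (Set.range R.root) (c j)) ∧
      (∀ j < m, LeviStep (c j) (c (j + 1)) ∨ DynkinStep (c j) (c (j + 1))) :=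
  DynkinChain.exists_chain_of_subset hP
    ⟨subset_rfl, by rintro - ⟨i, rfl⟩; exact ⟨R.reflectionPerm i i, by simp⟩,
      fun _ _ _ _ h ↦ h⟩ hP.1

/-- **Dynkin's theorem (modified):** every closed symmetric subsystem `P ⊆ Ω` is reached from
`Ω` by a finite chain of closed symmetric subsystems in which each step is a Levi or a Dynkin
procedure. -/
theorem dynkin_chain_exists
    (L : Type*) [LieRing L] [LieAlgebra ℂ L] [FiniteDimensional ℂ L]
    [LieAlgebra.IsSemisimple ℂ L]
    (H : LieSubalgebra ℂ L) [H.IsCartanSubalgebra]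
    (P : Set (Module.Dual ℂ H))
    (hP : IsClosedSymmetricSubsystem (lieRoots L H) P) :
    ∃ (m : ℕ) (c : ℕ → Set (Module.Dual ℂ H)),
      c 0 = lieRoots L H ∧ c m = P ∧
      (∀ j ≤ m, IsClosedSymmetricSubsystem (lieRoots L H) (c j)) ∧
      (∀ j < m, LeviStep (c j) (c (j + 1)) ∨ DynkinStep (c j) (c (j + 1))) := by
  rw [DynkinChain.lieRoots_eq_range_root L H] at hP ⊢
  exact dynkin_chain_exists_general (IsKilling.rootSystem H) P hP
end

section
/- Assume 𝔤 is simple. If Tor(Γ_𝔨) is cyclic, then every non-zero element of Tor(Γ_𝔨) is the image ᾱ of some root α ∈ Ω. -/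
/-!
Since `Tor(Γ)` is cyclic, the Chinese remainder theorem gives a homomorphism from `Γ = ℤΩ / ℤP` to
some `ℤ / n` which is nonzero at every nonzero image of a root. Lift it to a functional `F` on the
root lattice; subtracting multiples `n • β^∨` of coroots does not change it modulo `n` and moves it
into the region where all roots have level at most `n`. Then the roots with image `0` are those of
level `0` or `±n`, and they span `ℤP`.

By irreducibility, any two roots of level `n` differ by roots of level `0`. The preimage `S` of
`Tor(Γ)` is spanned by the roots in it. If `x` and `y` are roots in `S` whose levels have opposite
signs, then changing `x` by roots of level `0` makes its inner product with `y` negative, so that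
`x + y` is congruent to a root or `0` modulo `ℤP`; if the levels have the same sign, first change
`x` by a root of level `±n`. So the images of the roots in `S`, together with `0`, form a subgroup.
-/

open LieAlgebra

section DetectingFunctional

open Polynomial in
theorem exists_dual_forall_mem_apply_ne_zero {R F : Type*} [CommRing R] [IsDomain R] [Infinite R]
    [AddCommGroup F] [Module R F] [Module.Free R F] [Module.Finite R F] {s : Finset F}
    (hs : ∀ x ∈ s, x ≠ 0) : ∃ g : Module.Dual R F, ∀ x ∈ s, g x ≠ 0 := by
  let e : F →ₗ[R] R[X] := (degreeLT R (Module.finrank R F)).subtype ∘ₗ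
    ((Module.finBasis R F).equivFun ≪≫ₗ (degreeLTEquiv R _).symm).toLinearMap
  have he : Function.Injective e :=
    (Submodule.injective_subtype _).comp (LinearEquiv.injective _)
  have hprod : ∏ x ∈ s, e x ≠ 0 :=
    Finset.prod_ne_zero_iff.2 fun x hx ↦ (map_ne_zero_iff e he).2 (hs x hx)
  obtain ⟨t, ht⟩ : ∃ t, (∏ x ∈ s, e x).eval t ≠ 0 := by
    by_contra! h
    exact hprod (Polynomial.funext (by simpa using h))
  rw [eval_prod, Finset.prod_ne_zero_iff] at ht
  exact ⟨leval t ∘ₗ e, ht⟩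

theorem exists_linearProj_torsion {R G : Type*} [CommRing R] [IsDomain R] [IsPrincipalIdealRing R]
    [AddCommGroup G] [Module R G] [Module.Finite R G] :
    ∃ p : G →ₗ[R] Submodule.torsion R G, ∀ x : Submodule.torsion R G, p x = x := by
  let T := Submodule.torsion R G
  obtain ⟨s, hs⟩ := Module.projective_lifting_property T.mkQ LinearMap.id T.mkQ_surjective
  let q : G →ₗ[R] G := LinearMap.id - s ∘ₗ T.mkQ
  have hmem (x : G) : q x ∈ T := by
    rw [← T.ker_mkQ, LinearMap.mem_ker]
    simpa [q, sub_eq_zero] using (LinearMap.congr_fun hs (T.mkQ x)).symm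
  refine ⟨LinearMap.codRestrict T q hmem, fun x ↦ Subtype.ext ?_⟩
  have : T.mkQ x = 0 := by simp [T]
  simp [q, this]

/-- Pick `M` prime to the order `n` of the torsion and larger than the values on `s` of a functional
`g` not vanishing at the non-torsion elements of `s`; then `ZMod n × ZMod M` is cyclic. -/
theorem exists_addMonoidHom_zmod_forall_mem_eq_zero {G : Type*} [AddCommGroup G]
    [Module.Finite ℤ G] [IsAddCyclic (Submodule.torsion ℤ G)] (s : Finset G) :
    ∃ N : ℕ, 0 < N ∧ ∃ f : G →+ ZMod N, ∀ x ∈ s, f x = 0 → x = 0 := by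
  classical
  let T := Submodule.torsion ℤ G
  obtain ⟨p, hp⟩ := exists_linearProj_torsion (R := ℤ) (G := G)
  obtain ⟨g, hg⟩ := exists_dual_forall_mem_apply_ne_zero (R := ℤ)
    (s := (s.image T.mkQ).filter (· ≠ 0)) (by simp)
  have : Finite T := Module.finite_of_fg_torsion _ Submodule.torsion_isTorsion
  let n := Nat.card T
  let M := n * (∑ x ∈ s, (g (T.mkQ x)).natAbs) + 1
  have hgM {x : G} (hx : x ∈ s) : |g (T.mkQ x)| < M := by
    rw [Int.abs_eq_natAbs, Nat.cast_lt, Nat.lt_succ_iff]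
    calc (g (T.mkQ x)).natAbs
        ≤ ∑ x ∈ s, (g (T.mkQ x)).natAbs :=
          Finset.single_le_sum (f := fun x ↦ (g (T.mkQ x)).natAbs) (fun _ _ ↦ zero_le) hx
      _ ≤ n * ∑ x ∈ s, (g (T.mkQ x)).natAbs := Nat.le_mul_of_pos_left _ Nat.card_pos
  have hnM : n.Coprime M := by simp [M]
  let e := (ZMod.chineseRemainder hnM).symm.toAddEquiv
  let φ : T ≃+ ZMod n := (zmodAddCyclicAddEquiv inferInstance).symm
  let g' : G →+ ZMod M := (Int.castAddHom (ZMod M)).comp (g ∘ₗ T.mkQ).toAddMonoidHom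
  refine ⟨n * M, Nat.mul_pos Nat.card_pos (Nat.succ_pos _),
    e.toAddMonoidHom.comp ((φ.toAddMonoidHom.comp p.toAddMonoidHom).prod g'), fun x hx h ↦ ?_⟩
  have h0 : (φ (p x), (g (T.mkQ x) : ZMod M)) = 0 := (map_eq_zero_iff e e.injective).1 h
  obtain ⟨hpx, hgx⟩ := Prod.mk_eq_zero.1 h0
  have hgx : g (T.mkQ x) = 0 :=
    Int.eq_zero_of_abs_lt_dvd ((ZMod.intCast_zmod_eq_zero_iff_dvd _ _).1 hgx) (hgM hx)
  have hxT : x ∈ T := by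
    by_contra hxT
    refine hg (T.mkQ x) ?_ hgx
    simpa [hxT] using ⟨x, hx, rfl⟩
  simpa [hp ⟨x, hxT⟩] using congrArg Subtype.val ((map_eq_zero_iff φ φ.injective).1 hpx)

end DetectingFunctional

section Roots

variable {ι R M N : Type*} [CommRing R] [AddCommGroup M] [Module R M] [AddCommGroup N] [Module R N]
  (P : RootPairing ι R M N)

theorem exists_pairing_ne_zero_and_pairing_ne_zero [NeZero (2 : R)] [P.IsIrreducible] (i j : ι) :
    ∃ k, P.pairing k i ≠ 0 ∧ P.pairing k j ≠ 0 := by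
  by_contra! h
  let U := Submodule.span R (P.root '' {k | P.pairing k i ≠ 0})
  have hroot {k : ι} (hk : P.pairing k i ≠ 0) : P.root k ∈ U :=
    Submodule.subset_span ⟨k, hk, rfl⟩
  have hii : P.pairing i i ≠ 0 := by simp [two_ne_zero]
  have hinv (k : ι) : U ∈ Module.End.invtSubmodule (P.reflection k) := by
    refine (Module.End.mem_invtSubmodule _).2 (Submodule.span_le.2 ?_)
    rintro _ ⟨l, hl, rfl⟩
    by_cases hk : P.pairing k i = 0
    · have : P.pairing (P.reflectionPerm k l) i = P.pairing l i := by
        rw [← P.root_coroot'_eq_pairing, P.root_reflectionPerm, P.reflection_apply_root, map_sub,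
          map_smul, P.root_coroot'_eq_pairing, P.root_coroot'_eq_pairing, hk, smul_zero, sub_zero]
      simpa only [P.root_reflectionPerm] using! hroot (this.trans_ne hl)
    · simpa only [P.reflection_apply_root] using!
        U.sub_mem (hroot hl) (U.smul_mem (P.pairing l k) (hroot hk))
  have htop : U = ⊤ := RootPairing.IsIrreducible.eq_top_of_invtSubmodule_reflection (P := P) U hinv
    fun hbot ↦ P.ne_zero i (by simpa [hbot] using hroot hii)
  have hker : U ≤ LinearMap.ker (P.coroot' j) := by
    refine Submodule.span_le.2 ?_
    rintro _ ⟨k, hk, rfl⟩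
    simpa using h k hk
  simpa [two_ne_zero] using hker (htop ▸ Submodule.mem_top : P.root j ∈ U)

/-- The roots together with `0`, as elements of the root lattice. -/
def rootsWithZero : Set (P.rootSpan ℤ) :=
  insert 0 (Set.range (P.rootSpanMem ℤ))

theorem rootSpanMem_mem_rootsWithZero (i : ι) : P.rootSpanMem ℤ i ∈ rootsWithZero P :=
  .inr ⟨i, rfl⟩

theorem neg_mem_rootsWithZero {x : P.rootSpan ℤ} (hx : x ∈ rootsWithZero P) :
    -x ∈ rootsWithZero P := by
  obtain rfl | ⟨i, rfl⟩ := hx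
  · exact .inl neg_zero
  · exact .inr ⟨P.reflectionPerm i i, P.rootSpanMem_reflectionPerm_self ℤ i⟩

variable [P.IsCrystallographic]

theorem rootSpanMem_reflectionPerm (i j : ι) :
    P.rootSpanMem ℤ (P.reflectionPerm i j) =
      P.rootSpanMem ℤ j - P.pairingIn ℤ j i • P.rootSpanMem ℤ i := by
  ext
  simp [P.reflection_apply_root' ℤ]

variable [Fintype ι]

theorem sum_apply_sub_smul_sq_reflection (F : Module.Dual ℤ (P.rootSpan ℤ)) (b : ι) :
    ∑ i, (F (P.rootSpanMem ℤ i) - F (P.rootSpanMem ℤ b) * P.pairingIn ℤ i b) ^ 2 =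
      ∑ i, F (P.rootSpanMem ℤ i) ^ 2 := by
  rw [← (P.reflectionPerm b).sum_comp fun i ↦ F (P.rootSpanMem ℤ i) ^ 2]
  refine Finset.sum_congr rfl fun i _ ↦ ?_
  rw [rootSpanMem_reflectionPerm, map_sub, map_zsmul, smul_eq_mul, mul_comm (F _)]

variable [CharZero R]

theorem sum_apply_sub_smul_sq_lt (F : Module.Dual ℤ (P.rootSpan ℤ)) {b : ι} {m : ℤ} (hm : 0 < m)
    (hb : m < F (P.rootSpanMem ℤ b)) :
    ∑ i, (F (P.rootSpanMem ℤ i) - m * P.pairingIn ℤ i b) ^ 2 <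
      ∑ i, F (P.rootSpanMem ℤ i) ^ 2 := by
  have hexpand (t : ℤ) : ∑ i, (F (P.rootSpanMem ℤ i) - t * P.pairingIn ℤ i b) ^ 2 =
      ∑ i, F (P.rootSpanMem ℤ i) ^ 2 - t * (2 * ∑ i, F (P.rootSpanMem ℤ i) * P.pairingIn ℤ i b)
        + t ^ 2 * ∑ i, P.pairingIn ℤ i b ^ 2 := by
    simp_rw [Finset.mul_sum, ← Finset.sum_sub_distrib, ← Finset.sum_add_distrib]
    exact Finset.sum_congr rfl fun i _ ↦ by ring
  have hinv := sum_apply_sub_smul_sq_reflection P F b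
  have hpos : 0 < ∑ i, P.pairingIn ℤ i b ^ 2 :=
    Finset.sum_pos' (fun _ _ ↦ sq_nonneg _) ⟨b, Finset.mem_univ b, by simp⟩
  rw [hexpand] at hinv ⊢
  set g := F (P.rootSpanMem ℤ b)
  have hcross : 2 * ∑ i, F (P.rootSpanMem ℤ i) * P.pairingIn ℤ i b =
      g * ∑ i, P.pairingIn ℤ i b ^ 2 :=
    mul_left_cancel₀ (hm.trans hb).ne' (by linear_combination -hinv)
  rw [hcross]
  nlinarith [mul_pos (mul_pos hm (sub_pos.2 hb)) hpos]

omit [Fintype ι] in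
/-- If `F b > m`, then replacing `F` by `F - m • b^∨` decreases the sum of the squares of the values
of `F` at the roots, which the reflection in `b` preserves. -/
theorem exists_dual_intModEq_forall_root_le [Finite ι] (F : Module.Dual ℤ (P.rootSpan ℤ)) {m : ℤ}
    (hm : 0 < m) : ∃ F' : Module.Dual ℤ (P.rootSpan ℤ),
      (∀ x, F' x ≡ F x [ZMOD m]) ∧ ∀ i, F' (P.rootSpanMem ℤ i) ≤ m := by
  have := Fintype.ofFinite ι
  let E (G : Module.Dual ℤ (P.rootSpan ℤ)) : ℤ := ∑ i, G (P.rootSpanMem ℤ i) ^ 2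
  obtain ⟨G, hG, hmin⟩ := exists_minimalFor_of_wellFoundedLT
    (fun G : Module.Dual ℤ (P.rootSpan ℤ) ↦ ∀ x, G x ≡ F x [ZMOD m]) (fun G ↦ (E G).toNat)
    ⟨F, fun x ↦ rfl⟩
  refine ⟨G, hG, fun b ↦ ?_⟩
  by_contra! hb
  let G' := G - m • P.coroot'In ℤ b
  have hG' (x : P.rootSpan ℤ) : G' x ≡ F x [ZMOD m] :=
    (Int.modEq_iff_dvd.2 ⟨P.coroot'In ℤ b x, by simp [G']⟩).trans (hG x)
  have hlt : E G' < E G := by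
    simpa [E, G'] using sum_apply_sub_smul_sq_lt P G hm hb
  have hpos : 0 < E G := hlt.trans_le' (Finset.sum_nonneg fun _ _ ↦ sq_nonneg _)
  exact (hmin hG' (Int.toNat_le_toNat hlt.le)).not_gt ((Int.toNat_lt_toNat hpos).2 hlt)

theorem two_mul_rootFormIn_rootSpanMem (i j : ι) :
    2 * P.RootFormIn ℤ (P.rootSpanMem ℤ i) (P.rootSpanMem ℤ j) =
      P.pairingIn ℤ i j * P.RootFormIn ℤ (P.rootSpanMem ℤ j) (P.rootSpanMem ℤ j) := by
  apply FaithfulSMul.algebraMap_injective ℤ R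
  simpa only [map_mul, P.algebraMap_rootFormIn, P.algebraMap_pairingIn, map_ofNat] using!
    (P.posRootForm ℤ).two_mul_apply_root_root i j

theorem rootFormIn_comm (x y : P.rootSpan ℤ) : P.RootFormIn ℤ x y = P.RootFormIn ℤ y x :=
  (P.rootFormIn_isSymm ℤ).eq x y

theorem rootFormIn_reflectionPerm_left (i j : ι) :
    P.RootFormIn ℤ (P.rootSpanMem ℤ (P.reflectionPerm i j)) (P.rootSpanMem ℤ i) =
      -P.RootFormIn ℤ (P.rootSpanMem ℤ j) (P.rootSpanMem ℤ i) := by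
  have h := two_mul_rootFormIn_rootSpanMem P j i
  rw [rootSpanMem_reflectionPerm, map_sub, map_zsmul, LinearMap.sub_apply, LinearMap.smul_apply,
    smul_eq_mul]
  linarith

theorem rootFormIn_rootSpanMem_self_pos (i : ι) :
    0 < P.RootFormIn ℤ (P.rootSpanMem ℤ i) (P.rootSpanMem ℤ i) := by
  simpa only [P.posRootForm_eq ℤ] using (P.posRootForm ℤ).zero_lt_posForm_apply_root i

theorem pairingIn_neg_of_rootFormIn_neg {i j : ι}
    (h : P.RootFormIn ℤ (P.rootSpanMem ℤ i) (P.rootSpanMem ℤ j) < 0) : P.pairingIn ℤ i j < 0 := by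
  refine neg_of_mul_neg_left ?_ (rootFormIn_rootSpanMem_self_pos P j).le
  rw [← two_mul_rootFormIn_rootSpanMem]
  omega

theorem rootFormIn_rootSpanMem_eq_zero_iff {i j : ι} :
    P.RootFormIn ℤ (P.rootSpanMem ℤ i) (P.rootSpanMem ℤ j) = 0 ↔ P.pairing i j = 0 := by
  rw [← P.algebraMap_pairingIn ℤ, map_eq_zero_iff _ (FaithfulSMul.algebraMap_injective ℤ R),
    ← mul_eq_zero_iff_right (a := P.pairingIn ℤ i j) (rootFormIn_rootSpanMem_self_pos P j).ne',
    ← two_mul_rootFormIn_rootSpanMem, mul_eq_zero_iff_left two_ne_zero]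

variable [IsDomain R]

theorem rootFormIn_self_pos {x : P.rootSpan ℤ} (hx : x ≠ 0) : 0 < P.RootFormIn ℤ x x := by
  simpa only [P.posRootForm_eq ℤ] using P.posRootForm_posForm_pos_of_ne_zero ℤ hx

omit [Fintype ι] in
theorem free_rootSpan_int [Finite ι] : Module.Free ℤ (P.rootSpan ℤ) := by
  have := Fintype.ofFinite ι
  have : Module.IsTorsionFree ℤ (P.rootSpan ℤ) := by
    refine Module.isTorsionFree_iff_smul_eq_zero.2 fun m x h ↦ or_iff_not_imp_right.2 fun hx ↦ ?_
    have : m * P.RootFormIn ℤ x x = 0 := by rw [← smul_eq_mul, ← map_zsmul, h, map_zero]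
    exact (mul_eq_zero.1 this).resolve_right (rootFormIn_self_pos P hx).ne'
  infer_instance

theorem add_mem_rootsWithZero {x y : P.rootSpan ℤ} (hx : x ∈ rootsWithZero P)
    (hy : y ∈ rootsWithZero P) (hxy : P.RootFormIn ℤ x y < 0) : x + y ∈ rootsWithZero P := by
  obtain rfl | ⟨i, rfl⟩ := hx
  · simp at hxy
  obtain rfl | ⟨j, rfl⟩ := hy
  · simp at hxy
  by_cases hij : P.root i = -P.root j
  · exact .inl (Subtype.ext (by simp [hij]))
  · obtain ⟨k, hk⟩ :=
      P.root_add_root_mem_of_pairingIn_neg (pairingIn_neg_of_rootFormIn_neg P hxy) hij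
    exact .inr ⟨k, Subtype.ext hk⟩

theorem sub_mem_rootsWithZero {x y : P.rootSpan ℤ} (hx : x ∈ rootsWithZero P)
    (hy : y ∈ rootsWithZero P) (hxy : 0 < P.RootFormIn ℤ x y) : x - y ∈ rootsWithZero P := by
  rw [sub_eq_add_neg]
  exact add_mem_rootsWithZero P hx (neg_mem_rootsWithZero P hy) (by simpa using hxy)

end Roots

section Saturation

variable {R M : Type*} [CommRing R] [IsDomain R] [AddCommGroup M] [Module R M]

/-- The saturation of `W`: the elements with a nonzero multiple in `W`. -/
def saturation (W : Submodule R M) : Submodule R M :=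
  (Submodule.torsion R (M ⧸ W)).comap W.mkQ

variable {W : Submodule R M}

theorem mem_saturation_iff {x : M} : x ∈ saturation W ↔ ∃ r : R, r ≠ 0 ∧ r • x ∈ W := by
  simp [saturation, ← Submodule.Quotient.mk_smul]

theorem le_saturation : W ≤ saturation W := fun x hx ↦
  mem_saturation_iff.2 ⟨1, one_ne_zero, by simpa using hx⟩

theorem saturation_le_ker {M' : Type*} [AddCommGroup M'] [Module R M'] [Module.IsTorsionFree R M']
    {f : M →ₗ[R] M'} (hf : W ≤ LinearMap.ker f) : saturation W ≤ LinearMap.ker f := by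
  intro x hx
  obtain ⟨r, hr, hrx⟩ := mem_saturation_iff.1 hx
  have : r • f x = 0 := by rw [← map_smul, LinearMap.mem_ker.1 (hf hrx)]
  exact (smul_eq_zero.1 this).resolve_left hr

end Saturation

section Purity

variable {ι R M N : Type*} [CommRing R] [AddCommGroup M] [Module R M] [AddCommGroup N] [Module R N]
  (P : RootPairing ι R M N)

theorem exists_multiset_sum_eq (y : P.rootSpan ℤ) :
    ∃ s : Multiset (P.rootSpan ℤ), (∀ x ∈ s, x ∈ rootsWithZero P) ∧ s.sum = y := by
  have hspan : Submodule.span ℤ (Set.range (P.rootSpanMem ℤ)) = ⊤ :=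
    (Submodule.span_range_subtype_eq_top_iff _ _).2 rfl
  have hy : y ∈ AddSubgroup.closure (Set.range (P.rootSpanMem ℤ)) := by
    rw [← Submodule.span_int_eq_addSubgroupClosure, hspan]
    trivial
  rw [← AddSubgroup.mem_toAddSubmonoid, AddSubgroup.closure_toAddSubmonoid] at hy
  obtain ⟨s, hs, rfl⟩ := AddSubmonoid.exists_multiset_of_mem_closure hy
  refine ⟨s, fun x hx ↦ ?_, rfl⟩
  exact (hs x hx).elim .inr fun h ↦ by simpa using neg_mem_rootsWithZero P (.inr h)

variable [Fintype ι]

open Classical in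
/-- The sum of the roots in the coset `αᵢ + L`. It is orthogonal to the roots in `L`, since their
reflections permute the summands. -/
noncomputable def cosetSum (L : Submodule ℤ (P.rootSpan ℤ)) (i : ι) : P.rootSpan ℤ :=
  ∑ j with P.rootSpanMem ℤ j - P.rootSpanMem ℤ i ∈ L, P.rootSpanMem ℤ j

theorem exists_cosetSum_sub_smul_mem (L : Submodule ℤ (P.rootSpan ℤ)) (i : ι) :
    ∃ n : ℤ, 0 < n ∧ cosetSum P L i - n • P.rootSpanMem ℤ i ∈ L := by
  classical
  let s : Finset ι := {j | P.rootSpanMem ℤ j - P.rootSpanMem ℤ i ∈ L}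
  have hs : 0 < s.card := Finset.card_pos.2 ⟨i, by simp [s]⟩
  refine ⟨s.card, mod_cast hs, ?_⟩
  have : cosetSum P L i - (s.card : ℤ) • P.rootSpanMem ℤ i =
      ∑ j ∈ s, (P.rootSpanMem ℤ j - P.rootSpanMem ℤ i) := by
    simp [cosetSum, s]
  exact this ▸ L.sum_mem fun j hj ↦ (Finset.mem_filter.1 hj).2

variable [P.IsCrystallographic] [CharZero R]

theorem exists_rootFormIn_neg_of_cosetSum {L : Submodule ℤ (P.rootSpan ℤ)} {i : ι}
    {y : P.rootSpan ℤ} (h : P.RootFormIn ℤ (cosetSum P L i) y < 0) :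
    ∃ j, P.rootSpanMem ℤ j - P.rootSpanMem ℤ i ∈ L ∧ P.RootFormIn ℤ (P.rootSpanMem ℤ j) y < 0 := by
  classical
  by_contra! hj
  refine h.not_ge ?_
  rw [cosetSum, map_sum, LinearMap.sum_apply]
  exact Finset.sum_nonneg fun j hjL ↦ hj j (Finset.mem_filter.1 hjL).2

theorem rootFormIn_cosetSum_rootSpanMem_eq_zero {L : Submodule ℤ (P.rootSpan ℤ)} (i : ι) {k : ι}
    (hk : P.rootSpanMem ℤ k ∈ L) : P.RootFormIn ℤ (cosetSum P L i) (P.rootSpanMem ℤ k) = 0 := by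
  classical
  let s : Finset ι := {j | P.rootSpanMem ℤ j - P.rootSpanMem ℤ i ∈ L}
  have hmem (j : ι) : j ∈ s ↔ P.reflectionPerm k j ∈ s := by
    simp only [s, Finset.mem_filter_univ, rootSpanMem_reflectionPerm, sub_right_comm]
    exact (L.sub_mem_iff_left (L.smul_mem _ hk)).symm
  have hsum : ∑ j ∈ s, P.RootFormIn ℤ (P.rootSpanMem ℤ (P.reflectionPerm k j))
      (P.rootSpanMem ℤ k) = ∑ j ∈ s, P.RootFormIn ℤ (P.rootSpanMem ℤ j) (P.rootSpanMem ℤ k) :=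
    Finset.sum_equiv (P.reflectionPerm k) hmem fun _ _ ↦ rfl
  simp only [rootFormIn_reflectionPerm_left, Finset.sum_neg_distrib] at hsum
  rw [cosetSum, map_sum, LinearMap.sum_apply]
  exact self_eq_neg.1 hsum.symm

theorem rootFormIn_cosetSum_eq_zero {A : Set (P.rootSpan ℤ)} (hA : A ⊆ rootsWithZero P) (i : ι)
    {y : P.rootSpan ℤ} (hy : y ∈ saturation (Submodule.span ℤ A)) :
    P.RootFormIn ℤ (cosetSum P (Submodule.span ℤ A) i) y = 0 := by
  refine saturation_le_ker
    (f := P.RootFormIn ℤ (cosetSum P (Submodule.span ℤ A) i)) (Submodule.span_le.2 fun x hx ↦ ?_) hy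
  obtain rfl | ⟨k, rfl⟩ := hA hx
  · exact Submodule.zero_mem _
  · exact rootFormIn_cosetSum_rootSpanMem_eq_zero P i (Submodule.subset_span hx)

variable [IsDomain R]

theorem rootFormIn_cosetSum_pos {A : Set (P.rootSpan ℤ)} (hA : A ⊆ rootsWithZero P) {i : ι}
    (hi : P.rootSpanMem ℤ i ∉ saturation (Submodule.span ℤ A)) :
    0 < P.RootFormIn ℤ (cosetSum P (Submodule.span ℤ A) i) (P.rootSpanMem ℤ i) := by
  set σ := cosetSum P (Submodule.span ℤ A) i with hσ
  obtain ⟨n, hn, hσi⟩ := exists_cosetSum_sub_smul_mem P (Submodule.span ℤ A) i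
  have hσ0 : σ ≠ 0 := fun h ↦ hi <| by
    rw [← hσ, h, zero_sub, Submodule.neg_mem_iff] at hσi
    exact mem_saturation_iff.2 ⟨n, hn.ne', hσi⟩
  have hσσ := rootFormIn_cosetSum_eq_zero P hA i (le_saturation hσi)
  rw [← hσ, map_sub, map_zsmul, smul_eq_mul, sub_eq_zero] at hσσ
  exact pos_of_mul_pos_right (hσσ ▸ rootFormIn_self_pos P hσ0) hn.le

variable {A : Set (P.rootSpan ℤ)}

omit [Fintype ι] in
theorem exists_add_sub_mem_span_of_notMem_saturation [Finite ι] (hA : A ⊆ rootsWithZero P)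
    {a : P.rootSpan ℤ} (ha : a ∈ rootsWithZero P) (haA : a ∉ saturation (Submodule.span ℤ A))
    {t : Multiset (P.rootSpan ℤ)} (ht : ∀ x ∈ t, x ∈ rootsWithZero P)
    (hat : a + t.sum ∈ saturation (Submodule.span ℤ A)) :
    ∃ b ∈ t, ∃ x ∈ rootsWithZero P, a + b - x ∈ Submodule.span ℤ A := by
  have := Fintype.ofFinite ι
  set L := Submodule.span ℤ A
  obtain rfl | ⟨i, rfl⟩ := ha
  · exact absurd (Submodule.zero_mem _) haA
  let σ := cosetSum P L i
  have hσat : P.RootFormIn ℤ σ (P.rootSpanMem ℤ i) + P.RootFormIn ℤ σ t.sum = 0 := by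
    rw [← map_add]
    exact rootFormIn_cosetSum_eq_zero P hA i hat
  have hσa : 0 < P.RootFormIn ℤ σ (P.rootSpanMem ℤ i) := rootFormIn_cosetSum_pos P hA haA
  obtain ⟨b, hb, hσb⟩ : ∃ b ∈ t, P.RootFormIn ℤ σ b < 0 := by
    by_contra! h
    have ht0 : 0 ≤ P.RootFormIn ℤ σ t.sum := by
      rw [map_multiset_sum]
      exact Multiset.sum_nonneg (Multiset.forall_mem_map_iff.2 h)
    omega
  obtain ⟨j, hj, hjb⟩ := exists_rootFormIn_neg_of_cosetSum P hσb
  refine ⟨b, hb, _, add_mem_rootsWithZero P (rootSpanMem_mem_rootsWithZero P j) (ht b hb) hjb, ?_⟩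
  rwa [add_sub_add_right_eq_sub, ← neg_sub, L.neg_mem_iff]

omit [Fintype ι] in
/-- Of the expressions of an element of the saturation as a sum of roots, a shortest one modulo `A`
only involves roots in the saturation: a summand outside it can be merged with another one. -/
theorem saturation_le_span_rootsWithZero_inter [Finite ι] (hA : A ⊆ rootsWithZero P) :
    saturation (Submodule.span ℤ A) ≤
      Submodule.span ℤ (rootsWithZero P ∩ saturation (Submodule.span ℤ A)) := by
  set S := saturation (Submodule.span ℤ A)
  set L := Submodule.span ℤ (rootsWithZero P ∩ S)
  have hAL : Submodule.span ℤ A ≤ L := Submodule.span_mono fun x hx ↦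
    ⟨hA hx, le_saturation (Submodule.subset_span hx)⟩
  intro y hy
  obtain ⟨s, hs, rfl⟩ := exists_multiset_sum_eq P y
  induction hn : s.card using Nat.strong_induction_on generalizing s with
  | _ n ih =>
  by_cases hsS : ∀ a ∈ s, a ∈ S
  · exact multiset_sum_mem s fun a ha ↦ Submodule.subset_span ⟨hs a ha, hsS a ha⟩
  push Not at hsS
  obtain ⟨a, ha, haS⟩ := hsS
  obtain ⟨t, rfl⟩ := Multiset.exists_cons_of_mem ha
  rw [Multiset.forall_mem_cons] at hs
  rw [Multiset.sum_cons] at hy ⊢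
  obtain ⟨b, hb, x, hx, habx⟩ := exists_add_sub_mem_span_of_notMem_saturation P hA hs.1 haS hs.2 hy
  obtain ⟨u, rfl⟩ := Multiset.exists_cons_of_mem hb
  have hsum : a + (b ::ₘ u).sum = (a + b - x) + (x ::ₘ u).sum := by
    simp only [Multiset.sum_cons]
    abel
  rw [hsum] at hy ⊢
  refine L.add_mem (hAL habx) (ih (x ::ₘ u).card ?_ _ ?_ ?_ rfl)
  · simp [← hn]
  · simp only [Multiset.forall_mem_cons] at hs ⊢
    exact ⟨hx, hs.2.2⟩
  · exact (S.add_mem_iff_right (le_saturation habx)).1 hy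

end Purity

section LevelSpan

variable {ι R M N : Type*} [CommRing R] [AddCommGroup M] [Module R M] [AddCommGroup N] [Module R N]
  (P : RootPairing ι R M N)

/-- The sublattice spanned by the roots whose level, their value under the functional `F`, is
divisible by `n`. For `n = 0` these are the roots of level `0`. -/
def levelSpan (F : Module.Dual ℤ (P.rootSpan ℤ)) (n : ℤ) : Submodule ℤ (P.rootSpan ℤ) :=
  Submodule.span ℤ {x ∈ rootsWithZero P | n ∣ F x}

variable {P} {F : Module.Dual ℤ (P.rootSpan ℤ)} {n : ℤ}

theorem mem_levelSpan {x : P.rootSpan ℤ} (hx : x ∈ rootsWithZero P) (hFx : n ∣ F x) :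
    x ∈ levelSpan P F n :=
  Submodule.subset_span ⟨hx, hFx⟩

theorem mem_levelSpan_zero {x : P.rootSpan ℤ} (hx : x ∈ rootsWithZero P) (hFx : F x = 0) :
    x ∈ levelSpan P F 0 :=
  mem_levelSpan hx (zero_dvd_iff.2 hFx)

theorem levelSpan_zero_le : levelSpan P F 0 ≤ levelSpan P F n :=
  Submodule.span_mono fun _ hx ↦ ⟨hx.1, (dvd_zero n).trans hx.2⟩

theorem saturation_levelSpan_zero_le_ker : saturation (levelSpan P F 0) ≤ LinearMap.ker F :=
  saturation_le_ker <| Submodule.span_le.2 fun _ hx ↦ zero_dvd_iff.1 hx.2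

variable (hF : ∀ x ∈ rootsWithZero P, F x ≤ n) (hn : 0 < n)

include hF hn in
theorem level_eq_of_dvd {x : P.rootSpan ℤ} (hx : x ∈ rootsWithZero P) (hFx : n ∣ F x) :
    F x = 0 ∨ F x = n ∨ F x = -n := by
  have h₁ := hF x hx
  have h₂ := hF (-x) (neg_mem_rootsWithZero P hx)
  obtain ⟨k, hk⟩ := hFx
  rw [map_neg] at h₂
  have hk₁ : k ≤ 1 := by nlinarith
  have hk₂ : -1 ≤ k := by nlinarith
  interval_cases k <;> omega

include hF hn in
theorem exists_level_eq_of_apply_ne_zero {x : P.rootSpan ℤ}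
    (hxW : x ∈ saturation (levelSpan P F n)) (hFx : F x ≠ 0) :
    ∃ t ∈ rootsWithZero P, F t = n := by
  by_contra! h
  have hW : levelSpan P F n ≤ LinearMap.ker F := Submodule.span_le.2 fun t ht ↦ by
    obtain h₀ | h₀ | h₀ := level_eq_of_dvd hF hn ht.1 ht.2
    · exact h₀
    · exact absurd h₀ (h t ht.1)
    · exact absurd (by rw [map_neg, h₀, neg_neg]) (h (-t) (neg_mem_rootsWithZero P ht.1))
  exact hFx (saturation_le_ker hW hxW)

variable [Fintype ι] [IsDomain R] [CharZero R] [P.IsCrystallographic]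
include hF

theorem rootFormIn_pos_of_level_pos {x y : P.rootSpan ℤ} (hx : x ∈ rootsWithZero P)
    (hy : y ∈ rootsWithZero P) (hFx : 0 < F x) (hFy : F y = n) (hxy : P.RootFormIn ℤ x y ≠ 0) :
    0 < P.RootFormIn ℤ x y := by
  refine hxy.lt_or_gt.resolve_left fun hneg ↦ ?_
  have := hF _ (add_mem_rootsWithZero P hx hy hneg)
  rw [map_add] at this
  omega

include hn

theorem sub_mem_levelSpan_of_rootFormIn_ne_zero {x y : P.rootSpan ℤ} (hx : x ∈ rootsWithZero P)
    (hy : y ∈ rootsWithZero P) (hFx : F x = n) (hFy : F y = n) (hxy : P.RootFormIn ℤ x y ≠ 0) :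
    x - y ∈ levelSpan P F 0 := by
  obtain hneg | hpos := hxy.lt_or_gt
  · have := hF _ (add_mem_rootsWithZero P hx hy hneg)
    rw [map_add] at this
    omega
  · exact mem_levelSpan_zero (sub_mem_rootsWithZero P hx hy hpos) (by simp [hFx, hFy])

theorem sub_mem_levelSpan_of_level_pos {x y z : P.rootSpan ℤ} (hx : x ∈ rootsWithZero P)
    (hy : y ∈ rootsWithZero P) (hz : z ∈ rootsWithZero P) (hFx : F x = n) (hFy : F y = n)
    (hFz : 0 < F z) (hzx : P.RootFormIn ℤ z x ≠ 0) (hzy : P.RootFormIn ℤ z y ≠ 0)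
    (hxy : P.RootFormIn ℤ x y = 0) : x - y ∈ levelSpan P F 0 := by
  have hxz : x - z ∈ rootsWithZero P := sub_mem_rootsWithZero P hx hz <| by
    rw [rootFormIn_comm]
    exact rootFormIn_pos_of_level_pos hF hz hx hFz hFx hzx
  have hxzy : x - z + y ∈ rootsWithZero P := add_mem_rootsWithZero P hxz hy <| by
    simpa [hxy] using rootFormIn_pos_of_level_pos hF hz hy hFz hFy hzy
  have hFzn : F z = n := by
    have h₁ := hF _ hz
    have h₂ := hF _ hxzy
    simp only [map_add, map_sub] at h₂
    omega
  rw [rootFormIn_comm] at hzx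
  simpa using (levelSpan P F 0).add_mem
    (sub_mem_levelSpan_of_rootFormIn_ne_zero hF hn hx hz hFx hFzn hzx)
    (sub_mem_levelSpan_of_rootFormIn_ne_zero hF hn hz hy hFzn hFy hzy)

theorem sub_mem_levelSpan_of_level_zero {x y z : P.rootSpan ℤ} (hx : x ∈ rootsWithZero P)
    (hy : y ∈ rootsWithZero P) (hz : z ∈ rootsWithZero P) (hFx : F x = n) (hFy : F y = n)
    (hFz : F z = 0) (hzx : P.RootFormIn ℤ z x ≠ 0) (hzy : P.RootFormIn ℤ z y ≠ 0)
    (hxy : P.RootFormIn ℤ x y = 0) : x - y ∈ levelSpan P F 0 := by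
  wlog hpos : 0 < P.RootFormIn ℤ z x generalizing z
  · exact this (neg_mem_rootsWithZero P hz) (by simp [hFz]) (by simpa using hzx)
      (by simpa using hzy) (by simpa using (not_lt.1 hpos).lt_of_ne hzx)
  have hxz : x - z ∈ rootsWithZero P :=
    sub_mem_rootsWithZero P hx hz (by rwa [rootFormIn_comm])
  have := sub_mem_levelSpan_of_rootFormIn_ne_zero hF hn hxz hy (by simp [hFx, hFz]) hFy
    (by simpa [hxy] using hzy)
  simpa [sub_right_comm] using (levelSpan P F 0).add_mem this (mem_levelSpan_zero hz hFz)

variable [P.IsIrreducible]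

omit [Fintype ι] in
theorem sub_mem_levelSpan [Finite ι] {x y : P.rootSpan ℤ} (hx : x ∈ rootsWithZero P)
    (hy : y ∈ rootsWithZero P) (hFx : F x = n) (hFy : F y = n) : x - y ∈ levelSpan P F 0 := by
  have := Fintype.ofFinite ι
  by_cases hxy : P.RootFormIn ℤ x y = 0
  swap
  · exact sub_mem_levelSpan_of_rootFormIn_ne_zero hF hn hx hy hFx hFy hxy
  obtain ⟨z, hz, hzx, hzy, hFz⟩ : ∃ z ∈ rootsWithZero P, P.RootFormIn ℤ z x ≠ 0 ∧
      P.RootFormIn ℤ z y ≠ 0 ∧ 0 ≤ F z := by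
    obtain rfl | ⟨i, rfl⟩ := hx
    · simp [hn.ne] at hFx
    obtain rfl | ⟨j, rfl⟩ := hy
    · simp [hn.ne] at hFy
    obtain ⟨k, hki, hkj⟩ := exists_pairing_ne_zero_and_pairing_ne_zero P i j
    rw [Ne, ← rootFormIn_rootSpanMem_eq_zero_iff] at hki hkj
    obtain h | h := le_total 0 (F (P.rootSpanMem ℤ k))
    · exact ⟨_, rootSpanMem_mem_rootsWithZero P k, hki, hkj, h⟩
    · exact ⟨_, neg_mem_rootsWithZero P (rootSpanMem_mem_rootsWithZero P k), by simpa using hki,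
        by simpa using hkj, by simpa using h⟩
  obtain hFz | hFz := hFz.eq_or_lt
  · exact sub_mem_levelSpan_of_level_zero hF hn hx hy hz hFx hFy hFz.symm hzx hzy hxy
  · exact sub_mem_levelSpan_of_level_pos hF hn hx hy hz hFx hFy hFz hzx hzy hxy

theorem exists_mul_rootFormIn_eq_mul_apply {σ : P.rootSpan ℤ}
    (hσ : ∀ x ∈ levelSpan P F 0, P.RootFormIn ℤ σ x = 0) :
    ∃ c : ℤ, ∀ y ∈ saturation (levelSpan P F n), n * P.RootFormIn ℤ σ y = c * F y := by
  obtain ⟨c, hc⟩ : ∃ c, ∀ x ∈ rootsWithZero P, F x = n → P.RootFormIn ℤ σ x = c := by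
    by_cases ht : ∃ t ∈ rootsWithZero P, F t = n
    · obtain ⟨t, ht, hFt⟩ := ht
      refine ⟨P.RootFormIn ℤ σ t, fun x hx hFx ↦ ?_⟩
      rw [← sub_eq_zero, ← map_sub]
      exact hσ _ (sub_mem_levelSpan hF hn hx ht hFx hFt)
    · exact ⟨0, fun x hx hFx ↦ absurd ⟨x, hx, hFx⟩ ht⟩
  have hW : levelSpan P F n ≤ LinearMap.ker (n • P.RootFormIn ℤ σ - c • F) := by
    refine Submodule.span_le.2 fun x hx ↦ ?_
    suffices n * P.RootFormIn ℤ σ x = c * F x by simpa [sub_eq_zero] using this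
    obtain h | h | h := level_eq_of_dvd hF hn hx.1 hx.2
    · rw [hσ x (mem_levelSpan_zero hx.1 h), h, mul_zero, mul_zero]
    · rw [hc x hx.1 h, h, mul_comm]
    · have := hc (-x) (neg_mem_rootsWithZero P hx.1) (by rw [map_neg, h, neg_neg])
      rw [map_neg, neg_eq_iff_eq_neg] at this
      rw [this, h]
      ring
  exact ⟨c, fun y hy ↦ by simpa [sub_eq_zero] using saturation_le_ker hW hy⟩

theorem exists_rootFormIn_neg_of_mul_level_neg {x y : P.rootSpan ℤ} (hx : x ∈ rootsWithZero P)
    (hxW : x ∈ saturation (levelSpan P F n)) (hyW : y ∈ saturation (levelSpan P F n))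
    (hxy : F x * F y < 0) :
    ∃ x' ∈ rootsWithZero P, x' - x ∈ levelSpan P F 0 ∧ P.RootFormIn ℤ x' y < 0 := by
  obtain rfl | ⟨i, rfl⟩ := hx
  · simp at hxy
  have hFi : F (P.rootSpanMem ℤ i) ≠ 0 := left_ne_zero_of_mul hxy.ne
  let σ := cosetSum P (levelSpan P F 0) i
  have hσ : ∀ x ∈ levelSpan P F 0, P.RootFormIn ℤ σ x = 0 := fun x hx ↦
    rootFormIn_cosetSum_eq_zero P (fun _ hx ↦ hx.1) i (le_saturation hx)
  obtain ⟨c, hc⟩ := exists_mul_rootFormIn_eq_mul_apply hF hn hσ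
  have hσx : 0 < P.RootFormIn ℤ σ (P.rootSpanMem ℤ i) :=
    rootFormIn_cosetSum_pos P (fun _ hx ↦ hx.1) fun h ↦ hFi (saturation_levelSpan_zero_le_ker h)
  have hcx : 0 < c * F (P.rootSpanMem ℤ i) := by
    rw [← hc _ hxW]
    exact mul_pos hn hσx
  have hcy : n * P.RootFormIn ℤ σ y < 0 := by
    rw [hc y hyW]
    by_contra! h
    nlinarith [mul_neg_of_pos_of_neg hcx hxy, mul_nonneg (sq_nonneg (F (P.rootSpanMem ℤ i))) h]
  obtain ⟨j, hj, hjy⟩ := exists_rootFormIn_neg_of_cosetSum P (neg_of_mul_neg_right hcy hn.le)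
  exact ⟨_, rootSpanMem_mem_rootsWithZero P j, hj, hjy⟩

omit [Fintype ι] in
theorem exists_add_sub_mem_levelSpan_of_mul_level_neg [Finite ι] {x y : P.rootSpan ℤ}
    (hx : x ∈ rootsWithZero P) (hy : y ∈ rootsWithZero P)
    (hxW : x ∈ saturation (levelSpan P F n)) (hyW : y ∈ saturation (levelSpan P F n))
    (hxy : F x * F y < 0) : ∃ z ∈ rootsWithZero P, x + y - z ∈ levelSpan P F n := by
  have := Fintype.ofFinite ι
  obtain ⟨x', hx', hx'x, hx'y⟩ := exists_rootFormIn_neg_of_mul_level_neg hF hn hx hxW hyW hxy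
  refine ⟨x' + y, add_mem_rootsWithZero P hx' hy hx'y, levelSpan_zero_le ?_⟩
  rwa [add_sub_add_right_eq_sub, ← neg_sub, Submodule.neg_mem_iff]

omit [Fintype ι] in
theorem exists_sub_mem_levelSpan_mul_level_neg [Finite ι] {x : P.rootSpan ℤ}
    (hx : x ∈ rootsWithZero P) (hxW : x ∈ saturation (levelSpan P F n)) (hFx : ¬ n ∣ F x) :
    ∃ x' ∈ rootsWithZero P, x' - x ∈ levelSpan P F n ∧ F x' * F x < 0 := by
  have := Fintype.ofFinite ι
  wlog hneg : F x < 0 generalizing x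
  · obtain ⟨x', hx', hx'x, hFx'⟩ := this (neg_mem_rootsWithZero P hx)
      ((saturation _).neg_mem hxW) (by simpa using hFx) (by
        rw [map_neg]
        have : F x ≠ 0 := fun h ↦ hFx (h ▸ dvd_zero n)
        omega)
    refine ⟨-x', neg_mem_rootsWithZero P hx', ?_, by simpa using hFx'⟩
    rw [← Submodule.neg_mem_iff]
    convert hx'x using 1
    abel
  obtain ⟨t, ht, hFt⟩ := exists_level_eq_of_apply_ne_zero hF hn hxW hneg.ne
  have htW : t ∈ levelSpan P F n := mem_levelSpan ht hFt.symm.dvd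
  obtain ⟨x', hx', hx'x, hx't⟩ := exists_rootFormIn_neg_of_mul_level_neg hF hn hx hxW
    (le_saturation htW) (hFt ▸ mul_neg_of_neg_of_pos hneg hn)
  have hFx' : F x' = F x := by
    simpa [sub_eq_zero] using
      saturation_levelSpan_zero_le_ker (le_saturation hx'x)
  refine ⟨x' + t, add_mem_rootsWithZero P hx' ht hx't, ?_, mul_neg_of_pos_of_neg ?_ hneg⟩
  · rw [add_sub_right_comm]
    exact Submodule.add_mem _ (levelSpan_zero_le hx'x) htW
  · have h := hF (-x) (neg_mem_rootsWithZero P hx)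
    have hne : -F x ≠ n := fun h ↦ hFx (by simp [← h])
    rw [map_neg] at h
    rw [map_add, hFx', hFt]
    omega

omit [Fintype ι] in
theorem exists_add_sub_mem_levelSpan [Finite ι] {x y : P.rootSpan ℤ}
    (hx : x ∈ rootsWithZero P) (hy : y ∈ rootsWithZero P)
    (hxW : x ∈ saturation (levelSpan P F n)) (hyW : y ∈ saturation (levelSpan P F n)) :
    ∃ z ∈ rootsWithZero P, x + y - z ∈ levelSpan P F n := by
  by_cases hFx : n ∣ F x
  · exact ⟨y, hy, by simpa using mem_levelSpan hx hFx⟩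
  by_cases hFy : n ∣ F y
  · exact ⟨x, hx, by simpa using mem_levelSpan hy hFy⟩
  have hxy : F x * F y ≠ 0 :=
    mul_ne_zero (fun h ↦ hFx (h ▸ dvd_zero n)) fun h ↦ hFy (h ▸ dvd_zero n)
  obtain hxy | hxy := hxy.lt_or_gt
  · exact exists_add_sub_mem_levelSpan_of_mul_level_neg hF hn hx hy hxW hyW hxy
  obtain ⟨x', hx', hx'x, hFx'⟩ := exists_sub_mem_levelSpan_mul_level_neg hF hn hx hxW hFx
  have hx'W : x' ∈ saturation (levelSpan P F n) := by
    simpa using Submodule.add_mem _ (le_saturation hx'x) hxW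
  have hx'y : F x' * F y < 0 := by
    by_contra! h
    nlinarith [mul_neg_of_neg_of_pos hFx' hxy, mul_nonneg (sq_nonneg (F x)) h]
  obtain ⟨z, hz, hxyz⟩ :=
    exists_add_sub_mem_levelSpan_of_mul_level_neg hF hn hx' hy hx'W hyW hx'y
  refine ⟨z, hz, ?_⟩
  convert Submodule.sub_mem _ hxyz hx'x using 1
  abel

omit [Fintype ι] in
theorem exists_sub_mem_levelSpan [Finite ι] {y : P.rootSpan ℤ}
    (hy : y ∈ saturation (levelSpan P F n)) : ∃ z ∈ rootsWithZero P, y - z ∈ levelSpan P F n := by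
  set W := levelSpan P F n
  suffices ∃ z ∈ rootsWithZero P ∩ saturation W, y - z ∈ W from
    this.imp fun z hz ↦ ⟨hz.1.1, hz.2⟩
  replace hy := saturation_le_span_rootsWithZero_inter P (fun _ hx ↦ hx.1) hy
  rw [← Submodule.mem_toAddSubgroup, Submodule.span_int_eq_addSubgroupClosure] at hy
  induction hy using AddSubgroup.closure_induction with
  | mem x hx => exact ⟨x, hx, by simp⟩
  | zero => exact ⟨0, ⟨.inl rfl, zero_mem _⟩, by simp⟩
  | neg x _ hx =>
    obtain ⟨z, ⟨hz, hzS⟩, hxz⟩ := hx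
    refine ⟨-z, ⟨neg_mem_rootsWithZero P hz, neg_mem hzS⟩, ?_⟩
    rw [← neg_sub', Submodule.neg_mem_iff]
    exact hxz
  | add x y _ _ hx hy =>
    obtain ⟨z, ⟨hz, hzS⟩, hxz⟩ := hx
    obtain ⟨w, ⟨hw, hwS⟩, hyw⟩ := hy
    obtain ⟨v, hv, hzwv⟩ := exists_add_sub_mem_levelSpan hF hn hz hw hzS hwS
    refine ⟨v, ⟨hv, ?_⟩, ?_⟩
    · simpa using sub_mem (add_mem hzS hwS) (le_saturation hzwv)
    · convert add_mem (add_mem hxz hyw) hzwv using 1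
      abel

end LevelSpan

section Quotient

variable {ι R M N Γ : Type*} [Finite ι] [CommRing R] [IsDomain R] [CharZero R] [AddCommGroup M]
  [Module R M] [AddCommGroup N] [Module R N] (P : RootPairing ι R M N) [P.IsCrystallographic]
  [AddCommGroup Γ] [IsAddCyclic (Submodule.torsion ℤ Γ)] {π : P.rootSpan ℤ →ₗ[ℤ] Γ}

theorem exists_dual_dvd_iff_apply_eq_zero (hπ : Function.Surjective π) :
    ∃ n : ℤ, 0 < n ∧ ∃ F : Module.Dual ℤ (P.rootSpan ℤ), (∀ x ∈ rootsWithZero P, F x ≤ n) ∧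
      ∀ x ∈ rootsWithZero P, n ∣ F x ↔ π x = 0 := by
  have : Module.Finite ℤ Γ := Module.Finite.of_surjective π hπ
  have hfin : (π '' rootsWithZero P).Finite := ((Set.finite_range _).insert 0).image π
  obtain ⟨n, hn, f, hf⟩ := exists_addMonoidHom_zmod_forall_mem_eq_zero hfin.toFinset
  have := free_rootSpan_int P
  obtain ⟨F₀, hF₀⟩ := Module.projective_lifting_property
    (Int.castAddHom (ZMod n)).toIntLinearMap (f.toIntLinearMap ∘ₗ π) (ZMod.intCast_surjective)
  obtain ⟨F, hFF₀, hF⟩ := exists_dual_intModEq_forall_root_le P F₀ (m := n) (mod_cast hn)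
  refine ⟨n, mod_cast hn, F, ?_, fun x hx ↦ ?_⟩
  · rintro _ (rfl | ⟨i, rfl⟩)
    · simp
    · exact hF i
  · have hx₀ : (F₀ x : ZMod n) = f (π x) := LinearMap.congr_fun hF₀ x
    rw [← ZMod.intCast_zmod_eq_zero_iff_dvd, (ZMod.intCast_eq_intCast_iff _ _ _).2 (hFF₀ x), hx₀]
    exact ⟨hf _ (hfin.mem_toFinset.2 (Set.mem_image_of_mem π hx)), fun h ↦ by rw [h, map_zero]⟩

theorem exists_mem_rootsWithZero_apply_eq [P.IsIrreducible] (hπ : Function.Surjective π)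
    (hker : LinearMap.ker π ≤ Submodule.span ℤ {x ∈ rootsWithZero P | π x = 0}) {g : Γ}
    (hg : g ∈ Submodule.torsion ℤ Γ) : ∃ x ∈ rootsWithZero P, π x = g := by
  obtain ⟨n, hn, F, hF, hFπ⟩ := exists_dual_dvd_iff_apply_eq_zero P hπ
  have hW : levelSpan P F n = LinearMap.ker π := by
    have : {x ∈ rootsWithZero P | n ∣ F x} = {x ∈ rootsWithZero P | π x = 0} :=
      Set.ext fun x ↦ and_congr_right (hFπ x)
    rw [levelSpan, this]
    exact (Submodule.span_le.2 fun x hx ↦ hx.2).antisymm hker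
  obtain ⟨y, rfl⟩ := hπ g
  have hy : y ∈ saturation (levelSpan P F n) := by
    obtain ⟨m, hm⟩ := Submodule.mem_torsion_iff _ |>.1 hg
    refine mem_saturation_iff.2 ⟨m, nonZeroDivisors.ne_zero m.2, ?_⟩
    rw [hW, LinearMap.mem_ker, map_zsmul]
    exact hm
  obtain ⟨z, hz, hyz⟩ := exists_sub_mem_levelSpan hF hn hy
  rw [hW, LinearMap.mem_ker, map_sub, sub_eq_zero] at hyz
  exact ⟨z, hz, hyz.symm⟩

end Quotient

section LatticeQuotient

variable {ι R M N : Type*} [CommRing R] [AddCommGroup M] [Module R M] [AddCommGroup N] [Module R N]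
  (P : RootPairing ι R M N)

/-- The quotient map from the root lattice to `ℤΩ / ℤQ`. -/
def rootLatticeMk (Q : Set M) : P.rootSpan ℤ →ₗ[ℤ] AddSubgroup.closure (Set.range P.root) ⧸
    (AddSubgroup.closure Q).addSubgroupOf (AddSubgroup.closure (Set.range P.root)) :=
  ((QuotientAddGroup.mk' _).comp (AddEquiv.addSubgroupCongr
    (Submodule.span_int_eq_addSubgroupClosure (Set.range P.root))).toAddMonoidHom).toIntLinearMap

theorem rootLatticeMk_surjective (Q : Set M) : Function.Surjective (rootLatticeMk P Q) :=
  (QuotientAddGroup.mk'_surjective _).comp (AddEquiv.surjective _)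

theorem rootLatticeMk_eq_zero_iff {Q : Set M} {x : P.rootSpan ℤ} :
    rootLatticeMk P Q x = 0 ↔ (x : M) ∈ AddSubgroup.closure Q :=
  (QuotientAddGroup.eq_zero_iff _).trans AddSubgroup.mem_addSubgroupOf

theorem ker_rootLatticeMk_le {Q : Set M} (hQ : Q ⊆ Set.range P.root) :
    LinearMap.ker (rootLatticeMk P Q) ≤
      Submodule.span ℤ {x ∈ rootsWithZero P | rootLatticeMk P Q x = 0} := by
  set U := Submodule.span ℤ {x ∈ rootsWithZero P | rootLatticeMk P Q x = 0}
  have hU : AddSubgroup.closure Q ≤ (U.map (P.rootSpan ℤ).subtype).toAddSubgroup := by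
    refine (AddSubgroup.closure_le _).2 fun α hα ↦ ?_
    obtain ⟨i, rfl⟩ := hQ hα
    exact ⟨P.rootSpanMem ℤ i, Submodule.subset_span ⟨rootSpanMem_mem_rootsWithZero P i,
      (rootLatticeMk_eq_zero_iff P).2 (AddSubgroup.subset_closure hα)⟩, rfl⟩
  intro x hx
  obtain ⟨y, hy, hyx⟩ := hU ((rootLatticeMk_eq_zero_iff P).1 hx)
  exact Subtype.ext hyx ▸ hy

theorem torsion_cyclic_every_elt_is_root_image_general [Finite ι] [IsDomain R] [CharZero R]
    [P.IsCrystallographic] [P.IsIrreducible] {Ω Q : Set M} (hΩ : Ω = Set.range P.root)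
    (hQ : Q ⊆ Ω)
    (hcyc : IsAddCyclic ↥(AddCommGroup.torsion (AddSubgroup.closure Ω ⧸
      (AddSubgroup.closure Q).addSubgroupOf (AddSubgroup.closure Ω)))) :
    ∀ x ∈ AddCommGroup.torsion (AddSubgroup.closure Ω ⧸
        (AddSubgroup.closure Q).addSubgroupOf (AddSubgroup.closure Ω)), x ≠ 0 →
      ∃ (α : M) (hα : α ∈ Ω), QuotientAddGroup.mk ⟨α, AddSubgroup.subset_closure hα⟩ = x := by
  subst hΩ
  rw [← Submodule.torsion_int] at hcyc ⊢
  intro x hx hx₀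
  have : IsAddCyclic (Submodule.torsion ℤ _) := hcyc
  obtain ⟨_, rfl | ⟨i, rfl⟩, rfl⟩ := exists_mem_rootsWithZero_apply_eq P
    (rootLatticeMk_surjective P Q) (ker_rootLatticeMk_le P hQ) hx
  · exact absurd (map_zero _) hx₀
  · exact ⟨P.root i, ⟨i, rfl⟩, rfl⟩

end LatticeQuotient

section LieRoots

variable (L : Type*) [LieRing L] [LieAlgebra ℂ L] [FiniteDimensional ℂ L]
  [LieAlgebra.IsKilling ℂ L] (H : LieSubalgebra ℂ L) [H.IsCartanSubalgebra]

theorem lieRoots_eq_range : lieRoots L H = Set.range (IsKilling.rootSystem H).root := by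
  ext α
  constructor
  · rintro ⟨hα, hspace⟩
    let w : LieModule.Weight ℂ H L := ⟨⇑α, hspace⟩
    have hw : w.IsNonZero := fun h ↦ hα (DFunLike.coe_injective h)
    exact ⟨⟨w, by simpa using hw⟩, rfl⟩
  · rintro ⟨⟨w, hw⟩, rfl⟩
    exact ⟨(IsKilling.rootSystem H).ne_zero _, w.genWeightSpace_ne_bot⟩

end LieRoots

/-- If `𝔤` is simple and `Tor(Γ_𝔨)` is cyclic, then every nonzero element of `Tor(Γ_𝔨)` is
the image of a root. -/
theorem torsion_cyclic_every_elt_is_root_image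
    (L : Type*) [LieRing L] [LieAlgebra ℂ L] [FiniteDimensional ℂ L]
    [LieAlgebra.IsSimple ℂ L]
    (H : LieSubalgebra ℂ L) [H.IsCartanSubalgebra]
    (P : Set (Module.Dual ℂ H))
    (hP : IsClosedSymmetricSubsystem (lieRoots L H) P)
    (hcyc : IsAddCyclic ↥(AddCommGroup.torsion (GammaK L H P))) :
    ∀ x ∈ AddCommGroup.torsion (GammaK L H P), x ≠ 0 →
      ∃ (α : Module.Dual ℂ H) (hα : α ∈ lieRoots L H), rootImage L H P hα = x :=
  torsion_cyclic_every_elt_is_root_image_general (IsKilling.rootSystem H) (lieRoots_eq_range L H)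
    hP.1 hcyc
end
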